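/- Let n ≥ 1, let G = Sp_{2n}(F_2), and let χ be the character of a finite-dimensional irreducible complex representation of G whose degree χ(1) is odd. Let e be the exponent of G and let e' be the odd part of e (i.e. e' = e divided by the largest power of 2 dividing e). Then for every natural number m coprime to e such that m ≡ 2^k (mod e') for some natural number k, one has χ(g^m) = χ(g) for all g ∈ G. -/

import Mathlib

/-!
Characters are constant on conjugacy classes, so it suffices to conjugate `g` to `g ^ m` inside the
isometry group of a nondegenerate alternating form on an `𝔽₂`-space. The Fitting decomposition of
the self-adjoint element `t = g + g⁻¹` splits the space orthogonally and reduces this to two cases.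

If `t` is invertible, start from a linear conjugator `T`, which exists because `m` is a power of `2`
modulo the odd part of the order of `g`, so that `x ↦ x ^ m` permutes the eigenvalues of `g` by
Galois conjugation. The defect `T⋆ T` of `T` from being an isometry is a self-adjoint element of the
centraliser of `g`; a power of it handles the part of odd order. The remaining unipotent factor is
the norm of some `1 + g t L`, as `L + L² = K` is solvable for nilpotent `K`.

If `t` is nilpotent, `g` is unipotent and the space is an orthogonal sum of blocks generated over
`𝔽₂[g]` by one or two vectors. As `g² = 1 + t g`, a block generated by `v` is determined by the
functional `p ↦ B (v, p(t) g v)` on `𝔽₂[t]`. Replacing `g` by `g ^ m` changes these functionals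
by a multiple of `t²`, which is again absorbed by a norm or by a change of generators.
-/

namespace SymplecticTwo

open Polynomial

section BilinearForm

variable {F V W : Type*} [Field F] [AddCommGroup V] [Module F V] [AddCommGroup W] [Module F W]
  {B : LinearMap.BilinForm F V}

/-- `g` and `h` are conjugate by an isometry of `B`. Invertibility of the conjugator is not
demanded, since it is automatic for nondegenerate forms on finite-dimensional spaces. -/
def IsometricConj (B : LinearMap.BilinForm F V) (g h : Module.End F V) : Prop :=
  ∃ T : Module.End F V, T * g = h * T ∧ B.IsOrthogonal T

theorem injective_of_isOrthogonal (hB : B.Nondegenerate) {T : Module.End F V}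
    (hT : B.IsOrthogonal T) : Function.Injective T := by
  refine (injective_iff_map_eq_zero T).2 fun y hy => hB.1 y fun x => ?_
  rw [← hT, hy, map_zero, LinearMap.zero_apply]

theorem isUnit_of_injective [FiniteDimensional F V] {f : Module.End F V}
    (hf : Function.Injective f) : IsUnit f :=
  (Module.End.isUnit_iff f).2 ⟨hf, LinearMap.injective_iff_surjective.1 hf⟩

theorem isOrthogonal_pow {f : Module.End F V} (hf : B.IsOrthogonal f) (n : ℕ) :
    B.IsOrthogonal ⇑(f ^ n) := by
  induction n with
  | zero => intro x y; rfl
  | succ n ih => intro x y; rw [pow_succ', Module.End.mul_apply, Module.End.mul_apply, hf, ih]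

theorem isAdjointPair_inv {g : (Module.End F V)ˣ} (hg : B.IsOrthogonal g) :
    LinearMap.IsAdjointPair B B g (↑g⁻¹ : Module.End F V) := fun x y => by
  rw [← hg x, ← Module.End.mul_apply, g.mul_inv, Module.End.one_apply]

theorem isAdjointPair_inv' {g : (Module.End F V)ˣ} (hg : B.IsOrthogonal g) :
    LinearMap.IsAdjointPair B B (↑g⁻¹ : Module.End F V) g := fun x y => by
  rw [← hg, ← Module.End.mul_apply, g.mul_inv, Module.End.one_apply]

theorem isAdjointPair_aeval {f f' : Module.End F V} (h : LinearMap.IsAdjointPair B B f f')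
    (p : F[X]) : LinearMap.IsAdjointPair B B (aeval f p) (aeval f' p) := by
  induction p using Polynomial.induction_on' with
  | add p q hp hq => rw [map_add, map_add]; exact hp.add hq
  | monomial n a =>
    have hpow : LinearMap.IsAdjointPair B B ⇑(f ^ n) ⇑(f' ^ n) := by
      induction n with
      | zero => exact LinearMap.isAdjointPair_one
      | succ n ih => rw [pow_succ, pow_succ']; exact ih.mul h
    rw [aeval_monomial, aeval_monomial, ← Algebra.smul_def, ← Algebra.smul_def]
    exact hpow.smul a

theorem isSelfAdjoint_of_gram (hB : B.IsSymm) {K : Module.End F V} {π : W →ₗ[F] V}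
    (hπ : Function.Surjective π) {D : LinearMap.BilinForm F W} (hD : D.IsSymm)
    (hK : ∀ x y, B (K (π x)) (π y) = D x y) : B.IsSelfAdjoint K := fun u v => by
  obtain ⟨x, rfl⟩ := hπ u
  obtain ⟨y, rfl⟩ := hπ v
  rw [hK, ← hB.eq, hK, ← hD.eq]

theorem isNilpotent_of_range_le {K w : Module.End F V} (hKw : Commute K w) (hw : IsNilpotent w)
    (h : LinearMap.range K ≤ LinearMap.range w) : IsNilpotent K := by
  obtain ⟨n, hn⟩ := hw
  have hrange : ∀ j, LinearMap.range (K ^ j) ≤ LinearMap.range (w ^ j) := fun j => by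
    induction j with
    | zero => rw [pow_zero, pow_zero]
    | succ j ih =>
      rintro _ ⟨x, rfl⟩
      obtain ⟨y, hy⟩ := h ⟨x, rfl⟩
      obtain ⟨z, hz⟩ := ih ⟨y, rfl⟩
      refine ⟨z, ?_⟩
      rw [pow_succ', Module.End.mul_apply, hz, ← Module.End.mul_apply, ← (hKw.pow_left j).eq,
        Module.End.mul_apply, hy, pow_succ, Module.End.mul_apply]
  refine ⟨n, LinearMap.range_eq_bot.1 (le_bot_iff.1 ((hrange n).trans ?_))⟩
  rw [hn, LinearMap.range_zero]

variable [FiniteDimensional F V]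

/-- The conjugator sends `π x` to `p x`, which is well defined as `B` is nondegenerate. -/
theorem isometricConj_of_gram_eq (hB : B.Nondegenerate) {g h : Module.End F V}
    {π p : W →ₗ[F] V} {σ : W →ₗ[F] W} (hπ : Function.Surjective π)
    (hgram : ∀ x y, B (p x) (p y) = B (π x) (π y))
    (hπσ : ∀ x, π (σ x) = g (π x)) (hpσ : ∀ x, p (σ x) = h (p x)) :
    IsometricConj B g h := by
  obtain ⟨s, hs⟩ := π.exists_rightInverse_of_surjective (LinearMap.range_eq_top.2 hπ)
  have hπs : ∀ x, π (s x) = x := fun x => LinearMap.congr_fun hs x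
  have hT : B.IsOrthogonal (p ∘ₗ s) := fun x y => by
    simp only [LinearMap.comp_apply, hgram, hπs]
  have hTπ : ∀ x, (p ∘ₗ s) (π x) = p x := fun x => by
    refine sub_eq_zero.1 (hB.2 _ fun y => ?_)
    obtain ⟨z, rfl⟩ := LinearMap.injective_iff_surjective.1 (injective_of_isOrthogonal hB hT) y
    simp only [LinearMap.comp_apply, map_sub, hgram, hπs, sub_self]
  refine ⟨p ∘ₗ s, LinearMap.ext fun v => ?_, hT⟩
  obtain ⟨x, rfl⟩ := hπ v
  rw [Module.End.mul_apply, Module.End.mul_apply, ← hπσ, hTπ, hTπ, hpσ]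

theorem exists_endomorphism_of_bilinForm (hB : B.Nondegenerate) {π : W →ₗ[F] V}
    (hπ : Function.Surjective π) {D : LinearMap.BilinForm F W}
    (hl : ∀ x y, π x = 0 → D x y = 0) (hr : ∀ x y, π y = 0 → D x y = 0) :
    ∃ K : Module.End F V, ∀ x y, B (K (π x)) (π y) = D x y := by
  obtain ⟨s, hs⟩ := π.exists_rightInverse_of_surjective (LinearMap.range_eq_top.2 hπ)
  have hker : ∀ x, π (s (π x) - x) = 0 := fun x => by
    rw [map_sub, sub_eq_zero]; exact LinearMap.congr_fun hs (π x)
  refine ⟨(D.comp s s).symmCompOfNondegenerate B hB, fun x y => ?_⟩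
  rw [LinearMap.BilinForm.symmCompOfNondegenerate_left_apply, LinearMap.BilinForm.comp_apply,
    ← sub_eq_zero, ← sub_add_sub_cancel _ (D x (s (π y))), ← map_sub, hr _ _ (hker y), add_zero,
    ← LinearMap.sub_apply, ← map_sub, hl _ _ (hker x)]

theorem commute_of_gram (hB : B.Nondegenerate) {g K : Module.End F V} (hg : B.IsOrthogonal g)
    {π : W →ₗ[F] V} (hπ : Function.Surjective π) {σ : W →ₗ[F] W}
    (hπσ : ∀ x, π (σ x) = g (π x)) {D : LinearMap.BilinForm F W}
    (hD : ∀ x y, D (σ x) (σ y) = D x y) (hK : ∀ x y, B (K (π x)) (π y) = D x y) :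
    Commute g K := by
  refine LinearMap.ext fun u => sub_eq_zero.1 (hB.1 _ fun v => ?_)
  obtain ⟨x, rfl⟩ := hπ u
  obtain ⟨w, rfl⟩ := LinearMap.injective_iff_surjective.1 (injective_of_isOrthogonal hB hg) v
  obtain ⟨y, rfl⟩ := hπ w
  rw [map_sub, LinearMap.sub_apply, Module.End.mul_apply, Module.End.mul_apply, hg, ← hπσ, ← hπσ,
    hK, hK, hD, sub_self]

end BilinearForm

section AddInv

variable {A : Type*} [Ring A]

/-- The element `t = g + g⁻¹`, which is self-adjoint for an isometry `g` and is a trace in the sense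
that `g` is a root of `X² - t X + 1`. -/
def addInv (g : Aˣ) : A := g + ↑g⁻¹

theorem commute_addInv {g : Aˣ} {a : A} (h : Commute (g : A) a) : Commute (addInv g) a :=
  h.add_left h.units_inv_left

theorem commute_val_addInv (g : Aˣ) : Commute (g : A) (addInv g) :=
  (commute_addInv (Commute.refl (g : A))).symm

theorem commute_aeval {R : Type*} [CommRing R] [Algebra R A] {a b : A} (h : Commute a b)
    (p : R[X]) : Commute a (aeval b p) :=
  Algebra.commute_of_mem_adjoin_singleton_of_commute (aeval_mem_adjoin_singleton R b) h

theorem one_add_mul_inv_mul_one_add {g : Aˣ} {s : A} (h : Commute (g : A) s) :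
    (1 + s * ↑g⁻¹) * (1 + g * s) = 1 + (addInv g * s + s ^ 2) := by
  have hcross : s * ↑g⁻¹ * (g * s) = s ^ 2 := by
    rw [mul_assoc, Units.inv_mul_cancel_left, sq]
  rw [mul_add, mul_one, add_mul, one_mul, hcross, addInv, add_mul, h.units_inv_left.eq]
  abel

variable [Algebra (ZMod 2) A]

theorem add_one_sq_eq_mul_addInv (g : Aˣ) : ((g : A) + 1) ^ 2 = g * addInv g := by
  have h2 : (g : A) + g = 0 := ZModModule.add_self _
  rw [addInv, mul_add, g.mul_inv, sq, add_mul, mul_add, one_mul, mul_one, add_assoc,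
    ← add_assoc (g : A), h2, zero_add]

theorem exists_aeval_add_sq_eq {K : A} (hK : IsNilpotent K) :
    ∃ P : (ZMod 2)[X], aeval K P + aeval K P ^ 2 = K := by
  have hartin : ∀ n : ℕ, ∃ P : (ZMod 2)[X], P + P ^ 2 = X + X ^ 2 ^ n := fun n => by
    induction n with
    | zero => exact ⟨0, by simp [CharTwo.add_self_eq_zero]⟩
    | succ n ih =>
      obtain ⟨P, hP⟩ := ih
      refine ⟨P + X ^ 2 ^ n, ?_⟩
      rw [CharTwo.add_sq, ← pow_mul, ← pow_succ, ← add_assoc, add_right_comm P, hP, add_assoc X,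
        CharTwo.add_self_eq_zero, add_zero]
  obtain ⟨n, hn⟩ := hK
  obtain ⟨P, hP⟩ := hartin n
  refine ⟨P, ?_⟩
  rw [← map_pow, ← map_add, hP, map_add, map_pow, aeval_X,
    pow_eq_zero_of_le Nat.lt_two_pow_self.le hn, add_zero]

end AddInv

section Norm

variable {V W : Type*} [AddCommGroup V] [Module (ZMod 2) V] [AddCommGroup W] [Module (ZMod 2) W]
  {B : LinearMap.BilinForm (ZMod 2) V} {g : (Module.End (ZMod 2) V)ˣ}

theorem isSelfAdjoint_addInv (hg : B.IsOrthogonal g) : B.IsSelfAdjoint ⇑(addInv g) := fun x y => by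
  simp only [addInv, LinearMap.add_apply, map_add, isAdjointPair_inv hg x y,
    isAdjointPair_inv' hg x y]
  exact add_comm _ _

/-- With `t = g + g⁻¹`, the element `1 + g t L` of the centraliser of `g` has norm
`1 + t² (L + L²)`, and over `𝔽₂` the equation `L + L² = K` is solvable for nilpotent `K`. -/
theorem exists_norm_eq (hg : B.IsOrthogonal g) {K : Module.End (ZMod 2) V} (hK : IsNilpotent K)
    (hKsa : B.IsSelfAdjoint K) (hgK : Commute g.val K) :
    ∃ Y : Module.End (ZMod 2) V, Commute g.val Y ∧ Function.Injective Y ∧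
      ∀ x y, B (Y x) (Y y) = B x y + B x ((addInv g ^ 2 * K) y) := by
  obtain ⟨P, hP⟩ := exists_aeval_add_sq_eq hK
  set L := aeval K P
  have hgL : Commute g.val L := commute_aeval hgK P
  have htL := commute_addInv hgL
  set s := addInv g * L with hs
  have hgs : Commute g.val s := (commute_val_addInv g).mul_right hgL
  have hssa : B.IsSelfAdjoint s := by
    have := (isSelfAdjoint_addInv hg).mul (isAdjointPair_aeval hKsa P)
    rwa [← htL.eq] at this
  have hnorm : (1 + s * ↑g⁻¹) * (1 + g * s) = 1 + addInv g ^ 2 * K := by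
    rw [one_add_mul_inv_mul_one_add hgs, hs, htL.mul_pow, ← mul_assoc, ← sq, ← mul_add, hP]
  have hadj : LinearMap.IsAdjointPair B B ⇑(1 + g * s) ⇑(1 + s * ↑g⁻¹) :=
    LinearMap.isAdjointPair_one.add ((isAdjointPair_inv hg).mul hssa)
  refine ⟨1 + g * s, ?_, ?_, fun x y => ?_⟩
  · exact (Commute.one_right _).add_right ((Commute.refl _).mul_right hgs)
  · have hunit : IsUnit (1 + addInv g ^ 2 * K) :=
      (((commute_addInv hgK).pow_left 2).isNilpotent_mul_left hK).isUnit_one_add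
    refine Function.Injective.of_comp (f := ⇑(1 + s * ↑g⁻¹)) ?_
    rw [← Module.End.coe_mul, hnorm]
    exact ((Module.End.isUnit_iff _).1 hunit).1
  · rw [hadj, ← Module.End.mul_apply, hnorm]
    simp only [LinearMap.add_apply, Module.End.one_apply, map_add]

theorem isometricConj_of_norm [FiniteDimensional (ZMod 2) V] (hB : B.Nondegenerate)
    (hg : B.IsOrthogonal g) {K : Module.End (ZMod 2) V} (hK : IsNilpotent K)
    (hKsa : B.IsSelfAdjoint K) (hgK : Commute g.val K)
    {h : Module.End (ZMod 2) V} {π p : W →ₗ[ZMod 2] V} {σ : W →ₗ[ZMod 2] W}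
    (hπ : Function.Surjective π)
    (hgram : ∀ x y, B (p x) (p y) = B (π x) (π y) + B (π x) ((addInv g ^ 2 * K) (π y)))
    (hπσ : ∀ x, π (σ x) = g.val (π x)) (hpσ : ∀ x, p (σ x) = h (p x)) :
    IsometricConj B g h := by
  obtain ⟨Y, hgY, hY, hYB⟩ := exists_norm_eq hg hK hKsa hgK
  refine isometricConj_of_gram_eq hB (π := Y ∘ₗ π) (p := p) (σ := σ)
    ((LinearMap.injective_iff_surjective.1 hY).comp hπ) (fun x y => ?_) (fun x => ?_) hpσ
  · rw [hgram, LinearMap.comp_apply, LinearMap.comp_apply, hYB]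
  · rw [LinearMap.comp_apply, LinearMap.comp_apply, hπσ, ← Module.End.mul_apply, ← hgY.eq,
      Module.End.mul_apply]

end Norm

section InvertibleTrace

theorem isSelfAdjoint_units_inv {F V : Type*} [CommRing F] [AddCommGroup V] [Module F V]
    {B : LinearMap.BilinForm F V} {u : (Module.End F V)ˣ} (hu : B.IsSelfAdjoint u.val) :
    B.IsSelfAdjoint u⁻¹.val := fun x y => by
  conv_lhs => rw [← Module.End.one_apply (R := F) y, ← u.mul_inv, Module.End.mul_apply, ← hu,
    ← Module.End.mul_apply, u.mul_inv, Module.End.one_apply]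

theorem exists_odd_pow_add_one_isNilpotent {A : Type*} [Ring A] [Algebra (ZMod 2) A] [Finite A]
    (u : Aˣ) : ∃ i : ℕ, IsNilpotent (u.val ^ (2 * i + 1) + 1) := by
  obtain ⟨a, o, ⟨i, rfl⟩, hord⟩ := Nat.exists_eq_two_pow_mul_odd (orderOf_pos u).ne'
  have hpow : (u.val ^ (2 * i + 1)) ^ 2 ^ a = 1 := by
    rw [← pow_mul, mul_comm, ← hord, ← Units.val_pow_eq_pow_val, pow_orderOf_eq_one, Units.val_one]
  have hfrob : ((X + 1) ^ 2 ^ a : (ZMod 2)[X]) = X ^ 2 ^ a + 1 := by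
    rw [add_pow_char_pow, one_pow]
  refine ⟨i, 2 ^ a, ?_⟩
  have := congrArg (aeval (u.val ^ (2 * i + 1))) hfrob
  simp only [map_pow, map_add, aeval_X, map_one, hpow] at this
  rw [this, ZModModule.add_self]

theorem exists_selfAdjoint_of_linearConj {F V : Type*} [Field F] [AddCommGroup V] [Module F V]
    [FiniteDimensional F V] {B : LinearMap.BilinForm F V} (hB : B.Nondegenerate)
    (hsymm : B.IsSymm) {g h T : Module.End F V} (hg : B.IsOrthogonal g) (hh : B.IsOrthogonal h)
    (hT : Function.Injective T) (hTg : T * g = h * T) :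
    ∃ N : (Module.End F V)ˣ, (∀ x y, B (N.val x) y = B (T x) (T y)) ∧ B.IsSelfAdjoint N.val ∧
      Commute g N.val := by
  set N := (B.comp T T).symmCompOfNondegenerate B hB
  have hN : ∀ x y, B (N x) y = B (T x) (T y) := fun x y =>
    LinearMap.BilinForm.symmCompOfNondegenerate_left_apply _ hB y x
  have hinj : Function.Injective N := (injective_iff_map_eq_zero N).2 fun x hx =>
    hT <| (map_zero T).symm ▸ hB.1 _ fun y => by
      obtain ⟨y, rfl⟩ := LinearMap.injective_iff_surjective.1 hT y
      rw [← hN, hx, map_zero, LinearMap.zero_apply]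
  obtain ⟨n, hn⟩ := isUnit_of_injective hinj
  have hTg' : ∀ x, T (g x) = h (T x) := LinearMap.congr_fun hTg
  refine ⟨n, hn ▸ hN, hn ▸ ?_, hn ▸ ?_⟩
  · exact isSelfAdjoint_of_gram hsymm (π := LinearMap.id) (D := B.comp T T)
      Function.surjective_id ⟨fun x y => hsymm.eq (T x) (T y)⟩ hN
  · refine commute_of_gram hB hg (π := LinearMap.id) (σ := g) (D := B.comp T T)
      Function.surjective_id (fun _ => rfl) (fun x y => ?_) hN
    rw [LinearMap.BilinForm.comp_apply, hTg', hTg', hh, LinearMap.BilinForm.comp_apply]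

/-- A linear conjugator `T` is corrected to an isometry: the odd part of the order of `N = T⋆ T`
allows to replace it by `T N ^ i` with unipotent `N ^ (2 * i + 1)`, which is a norm. -/
theorem isometricConj_of_isUnit_addInv {V : Type*} [AddCommGroup V] [Module (ZMod 2) V]
    [FiniteDimensional (ZMod 2) V] {B : LinearMap.BilinForm (ZMod 2) V} (hB : B.Nondegenerate)
    (hsymm : B.IsSymm) {g : (Module.End (ZMod 2) V)ˣ} (hg : B.IsOrthogonal g)
    (ht : IsUnit (addInv g)) {h T : Module.End (ZMod 2) V} (hh : B.IsOrthogonal h)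
    (hT : Function.Injective T) (hTg : T * g = h * T) : IsometricConj B g h := by
  obtain ⟨N, hN, hNsa, hgN⟩ := exists_selfAdjoint_of_linearConj hB hsymm hg hh hT hTg
  have : Finite V := Module.finite_of_finite (ZMod 2)
  have : Finite (Module.End (ZMod 2) V) := Module.finite_of_finite (ZMod 2)
  obtain ⟨i, hnil⟩ := exists_odd_pow_add_one_isNilpotent N
  obtain ⟨s, hs⟩ := ht
  set K := N.val ^ (2 * i + 1) + 1 with hK
  have hKX : K = aeval N.val (X ^ (2 * i + 1) + 1 : (ZMod 2)[X]) := by simp [hK]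
  have hgK : Commute g.val K := hKX ▸ commute_aeval hgN _
  have hKsa : B.IsSelfAdjoint K := hKX ▸ isAdjointPair_aeval hNsa _
  have hgs : Commute g.val s⁻¹.val :=
    (hs ▸ commute_val_addInv g : Commute g.val s.val).units_inv_right
  have hsK : Commute (s⁻¹.val ^ 2) K :=
    (hs ▸ commute_addInv hgK : Commute s.val K).units_inv_left.pow_left 2
  have hssa : B.IsSelfAdjoint ⇑(s⁻¹.val ^ 2) := by
    have := isSelfAdjoint_units_inv (hs ▸ isSelfAdjoint_addInv hg : B.IsSelfAdjoint s.val)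
    rw [sq]; exact this.mul this
  refine isometricConj_of_norm hB hg (K := s⁻¹.val ^ 2 * K) (π := LinearMap.id)
    (p := T * N.val ^ i) (σ := g.val) (hsK.isNilpotent_mul_left hnil) ?_
    ((hgs.pow_right 2).mul_right hgK) Function.surjective_id (fun x y => ?_) (fun _ => rfl)
    fun x => ?_
  · have := hssa.mul hKsa
    rwa [← hsK.eq] at this
  · have hcancel : addInv g ^ 2 * (s⁻¹.val ^ 2 * K) = K := by
      rw [← hs, ← mul_assoc, ← Units.val_pow_eq_pow_val, ← Units.val_pow_eq_pow_val,
        ← Units.val_mul, inv_pow, mul_inv_cancel, Units.val_one, one_mul]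
    have hNi : LinearMap.IsAdjointPair B B ⇑(N.val ^ i) ⇑(N.val ^ i) := by
      simpa using isAdjointPair_aeval hNsa (X ^ i)
    have hNK : N.val ^ i * (N.val * N.val ^ i) = 1 + K := by
      rw [← pow_succ', ← pow_add, show i + (i + 1) = 2 * i + 1 by ring, hK, add_left_comm,
        ZModModule.add_self, add_zero]
    rw [hcancel, LinearMap.id_apply, LinearMap.id_apply, Module.End.mul_apply,
      Module.End.mul_apply, ← hN, hNsa, hNi, ← Module.End.mul_apply N.val, ← Module.End.mul_apply,
      hNK, LinearMap.add_apply, map_add, Module.End.one_apply]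
  · rw [← Module.End.mul_apply, mul_assoc, ← (hgN.pow_right i).eq, ← mul_assoc, hTg]
    rfl

end InvertibleTrace

section LinearConjugacy

section Expand

variable {p : ℕ} [Fact p.Prime] {q : (ZMod p)[X]} {a e m k : ℕ}

theorem aeval_pow_card_pow {A : Type*} [CommRing A] [Algebra (ZMod p) A] (x : A) (b : (ZMod p)[X])
    (k : ℕ) : aeval (x ^ p ^ k) b = aeval x b ^ p ^ k := by
  induction k generalizing x with
  | zero => rw [pow_zero, pow_one, pow_one]
  | succ k ih => rw [pow_succ p k, pow_mul, ← expand_aeval p, ZMod.expand_card, map_pow, ih,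
      ← pow_mul]

/-- On the roots of `q`, the map `x ↦ x ^ m` is a power of Frobenius. -/
theorem irreducible_dvd_expand_iff (hq : Irreducible q) (hdvd : q ∣ X ^ (p ^ a * e) - 1)
    (hmod : m ≡ p ^ k [MOD e]) (b : (ZMod p)[X]) : q ∣ expand (ZMod p) m b ↔ q ∣ b := by
  have : Fact (Irreducible q) := ⟨hq⟩
  have : CharP (AdjoinRoot q) p :=
    charP_of_injective_algebraMap (algebraMap (ZMod p) (AdjoinRoot q)).injective p
  have hroot : ∀ c : (ZMod p)[X], q ∣ c ↔ aeval (AdjoinRoot.root q) c = 0 := fun c => by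
    rw [AdjoinRoot.aeval_eq, AdjoinRoot.mk_eq_zero]
  have horder : AdjoinRoot.root q ^ e = 1 := by
    have hpow : AdjoinRoot.root q ^ (p ^ a * e) = 1 := by
      simpa [sub_eq_zero] using (hroot _).1 hdvd
    rwa [ExpChar.pow_prime_pow_mul_eq_one_iff p] at hpow
  have hfrob : AdjoinRoot.root q ^ m = AdjoinRoot.root q ^ p ^ k := by
    rw [pow_eq_pow_mod m horder, pow_eq_pow_mod (p ^ k) horder, hmod]
  rw [hroot, hroot, expand_aeval, hfrob, aeval_pow_card_pow]
  exact pow_eq_zero_iff (pow_ne_zero k (Nat.Prime.ne_zero Fact.out))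

/-- The factor `q` divides `q(X ^ m)` only once, as `X ^ m` is unramified away from `0`. -/
theorem exists_expand_eq_mul (hq : Irreducible q) (he : e ≠ 0) (hdvd : q ∣ X ^ (p ^ a * e) - 1)
    (hm : ¬ p ∣ m) (hmod : m ≡ p ^ k [MOD e]) :
    ∃ r, expand (ZMod p) m q = q * r ∧ ¬ q ∣ r := by
  have hdvd_iff := irreducible_dvd_expand_iff hq hdvd hmod
  obtain ⟨r, hr⟩ := (hdvd_iff q).2 dvd_rfl
  refine ⟨r, hr, ?_⟩
  rintro ⟨s, rfl⟩
  have hX : ¬ q ∣ X := fun h => by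
    have hN : p ^ a * e ≠ 0 := mul_ne_zero (pow_ne_zero a (Nat.Prime.ne_zero Fact.out)) he
    have := dvd_sub (dvd_pow h hN) hdvd
    rw [sub_sub_cancel] at this
    exact hq.not_isUnit (isUnit_of_dvd_one this)
  have hderiv : q ∣ expand (ZMod p) m (derivative q) * ((m : (ZMod p)[X]) * X ^ (m - 1)) := by
    rw [← derivative_expand, hr, derivative_mul, derivative_mul]
    exact dvd_add (Dvd.intro_left _ (by ring : derivative q * s * q = derivative q * (q * s)))
      (Dvd.intro _ rfl)
  have hm' : IsUnit (m : (ZMod p)[X]) := by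
    rw [← C_eq_natCast, isUnit_C, isUnit_iff_ne_zero, Ne, ZMod.natCast_eq_zero_iff]
    exact hm
  rcases hq.prime.dvd_or_dvd hderiv with h | h
  · exact hq.not_isUnit
      ((PerfectField.separable_of_irreducible hq).isUnit_of_dvd' dvd_rfl ((hdvd_iff _).1 h))
  · exact hX (hq.prime.dvd_of_dvd_pow ((hm'.dvd_mul_left).1 h))

theorem irreducible_pow_dvd_expand_iff (hq : Irreducible q) (he : e ≠ 0)
    (hdvd : q ∣ X ^ (p ^ a * e) - 1) (hm : ¬ p ∣ m) (hmod : m ≡ p ^ k [MOD e]) (j : ℕ)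
    (b : (ZMod p)[X]) : q ^ j ∣ expand (ZMod p) m b ↔ q ^ j ∣ b := by
  obtain ⟨r, hr, hqr⟩ := exists_expand_eq_mul hq he hdvd hm hmod
  have hexpand : ∀ j c, expand (ZMod p) m (q ^ j * c) = q ^ j * (r ^ j * expand (ZMod p) m c) :=
    fun j c => by rw [map_mul, map_pow, hr, mul_pow, mul_assoc]
  refine ⟨fun h => ?_, fun ⟨c, hc⟩ => hc ▸ hexpand j c ▸ dvd_mul_right _ _⟩
  induction j with
  | zero => rw [pow_zero]; exact one_dvd b
  | succ j ih =>
    obtain ⟨c, rfl⟩ := ih ((pow_dvd_pow q j.le_succ).trans h)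
    rw [hexpand, pow_succ, mul_dvd_mul_iff_left (pow_ne_zero j hq.ne_zero)] at h
    have hc := (hq.prime.dvd_or_dvd h).resolve_left fun h' => hqr (hq.prime.dvd_of_dvd_pow h')
    rw [pow_succ]
    exact mul_dvd_mul_left _ ((irreducible_dvd_expand_iff hq hdvd hmod c).1 hc)

end Expand

/-- The `F[X]`-module `M` embeds into its twist by `X ↦ X ^ m`. If `X` acts as `g`, such an
embedding conjugates `g` to `g ^ m`. -/
def HasPowTwist (F : Type*) [CommRing F] (m : ℕ) (M : Type*) [AddCommGroup M] [Module F[X] M] :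
    Prop :=
  ∃ S : M →ₛₗ[(expand F m).toRingHom] M, Function.Injective S

section HasPowTwist

variable {F : Type*} [CommRing F] {m : ℕ}

theorem HasPowTwist.of_linearEquiv {M N : Type*} [AddCommGroup M] [Module F[X] M]
    [AddCommGroup N] [Module F[X] N] (h : HasPowTwist F m N) (f : M ≃ₗ[F[X]] N) :
    HasPowTwist F m M := by
  obtain ⟨S, hS⟩ := h
  exact ⟨f.symm.toLinearMap.comp (S.comp f.toLinearMap),
    f.symm.injective.comp (hS.comp f.injective)⟩

theorem HasPowTwist.pi {ι : Type*} {M : ι → Type*} [∀ i, AddCommGroup (M i)]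
    [∀ i, Module F[X] (M i)] (h : ∀ i, HasPowTwist F m (M i)) : HasPowTwist F m (∀ i, M i) := by
  choose S hS using h
  refine ⟨⟨⟨fun x i => S i (x i), fun x y => ?_⟩, fun c x => ?_⟩, fun x y hxy => ?_⟩
  · funext i; exact map_add (S i) _ _
  · funext i; exact (S i).map_smulₛₗ c (x i)
  · funext i; exact hS i (congrFun hxy i)

theorem hasPowTwist_quotient_span_singleton {q : F[X]} (h : ∀ b, q ∣ expand F m b ↔ q ∣ b) :
    HasPowTwist F m (F[X] ⧸ Ideal.span {q}) := by
  have hcomap : (Ideal.span {q}).comap (expand F m).toRingHom = Ideal.span {q} := by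
    ext b
    rw [Ideal.mem_comap, Ideal.mem_span_singleton, Ideal.mem_span_singleton]
    exact h b
  let σ : F[X] ⧸ Ideal.span {q} →+* F[X] ⧸ Ideal.span {q} := Ideal.quotientMap _ _ hcomap.ge
  refine ⟨⟨⟨σ, map_add σ⟩, fun b x => ?_⟩, Ideal.quotientMap_injective' (H := hcomap.ge) hcomap.le⟩
  obtain ⟨y, rfl⟩ := Ideal.Quotient.mk_surjective x
  exact (map_mul σ (Ideal.Quotient.mk _ b) (Ideal.Quotient.mk _ y))

theorem HasPowTwist.exists_linearConj {V : Type*} [AddCommGroup V] [Module F V]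
    {g : Module.End F V} (h : HasPowTwist F m (Module.AEval' g)) :
    ∃ T : Module.End F V, Function.Injective T ∧ T * g = g ^ m * T := by
  obtain ⟨S, hS⟩ := h
  let f := Module.AEval'.of g
  have hf : ∀ (b : F[X]) x, f (aeval g b x) = b • f x := fun b x => Module.AEval.of_aeval_smul g b x
  have hT : ∀ (b : F[X]) x,
      f.symm (S (f (aeval g b x))) = aeval g (expand F m b) (f.symm (S (f x))) := fun b x => by
    rw [hf, S.map_smulₛₗ, LinearEquiv.symm_apply_eq, hf, f.apply_symm_apply]; rfl
  refine ⟨⟨⟨fun x => f.symm (S (f x)), fun x y => ?_⟩, fun c x => ?_⟩,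
    f.symm.injective.comp (hS.comp f.injective), LinearMap.ext fun x => ?_⟩
  · simp only [map_add]
  · simpa [Module.algebraMap_end_apply] using hT (C c) x
  · simpa using hT X x

end HasPowTwist

theorem exists_linearConj_pow {p : ℕ} [Fact p.Prime] {V : Type*} [AddCommGroup V]
    [Module (ZMod p) V] [FiniteDimensional (ZMod p) V] {g : Module.End (ZMod p) V} {a e m k : ℕ}
    (he : e ≠ 0) (hg : g ^ (p ^ a * e) = 1) (hm : ¬ p ∣ m) (hmod : m ≡ p ^ k [MOD e]) :
    ∃ T : Module.End (ZMod p) V, Function.Injective T ∧ T * g = g ^ m * T := by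
  set c : (ZMod p)[X] := X ^ (p ^ a * e) - 1 with hc
  have hkill : ∀ x : Module.AEval' g, c • x = 0 := fun x => by
    obtain ⟨y, rfl⟩ := (Module.AEval'.of g).surjective x
    rw [← Module.AEval.of_aeval_smul, hc, map_sub, map_pow, aeval_X, hg, map_one, sub_self,
      zero_smul, map_zero]
  have hc0 : c ≠ 0 := (monic_X_pow_sub_C (1 : ZMod p)
    (mul_ne_zero (pow_ne_zero a (Nat.Prime.ne_zero Fact.out)) he)).ne_zero
  have htors : Module.IsTorsion (ZMod p)[X] (Module.AEval' g) := fun x =>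
    ⟨⟨c, mem_nonZeroDivisors_of_ne_zero hc0⟩, hkill x⟩
  obtain ⟨ι, _, q, hq, j, ⟨f⟩⟩ := Module.equiv_directSum_of_isTorsion htors
  classical
  let f' := f.trans (DirectSum.linearEquivFunOnFintype (ZMod p)[X] ι _)
  refine (HasPowTwist.of_linearEquiv (.pi fun i => ?_) f').exists_linearConj
  refine hasPowTwist_quotient_span_singleton fun b => ?_
  rcases eq_or_ne (j i) 0 with hj | hj
  · simp only [hj, pow_zero, isUnit_one.dvd]
  · refine irreducible_pow_dvd_expand_iff (a := a) (hq i) he ((dvd_pow_self _ hj).trans ?_) hm hmod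
      (j i) b
    have h1 := congrArg f' (hkill (f'.symm fun _ => Submodule.Quotient.mk 1))
    rw [map_smul, map_zero, LinearEquiv.apply_symm_apply] at h1
    have h2 := congrFun h1 i
    rw [Pi.smul_apply, ← Submodule.Quotient.mk_smul, smul_eq_mul, mul_one, Pi.zero_apply,
      Submodule.Quotient.mk_eq_zero] at h2
    exact Ideal.mem_span_singleton.1 h2

end LinearConjugacy

section DualOfTruncatedPolynomials

variable {F : Type*} [Field F]

/-- The functionals on `F[X] ⧸ X ^ (n + 1)` form a free module of rank one, generated by any
functional that does not kill the socle. -/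
theorem exists_eq_apply_X_pow_mul {n : ℕ} {φ : F[X] →ₗ[F] F}
    (hφ : ∀ p, X ^ (n + 1) ∣ p → φ p = 0) (hφn : φ (X ^ n) ≠ 0) {j d : ℕ} (hjd : j + d = n + 1)
    {ψ : F[X] →ₗ[F] F} (hψ : ∀ p, X ^ j ∣ p → ψ p = 0) :
    ∃ k, ∀ p, ψ p = φ (X ^ d * k * p) := by
  induction j generalizing d ψ with
  | zero => exact ⟨0, fun p => by rw [hψ p (by simp), mul_zero, zero_mul, map_zero]⟩
  | succ j ih =>
    obtain rfl : n = j + d := by lia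
    set c := ψ (X ^ j) / φ (X ^ (j + d))
    obtain ⟨k, hk⟩ := ih (d := d + 1) (by lia)
      (ψ := ψ - φ ∘ₗ LinearMap.mulLeft F (C c * X ^ d)) (by
        rintro _ ⟨q, rfl⟩
        have hlow : X ^ j * q = q.coeff 0 • X ^ j + X ^ (j + 1) * q.divX := by
          conv_lhs => rw [← q.divX_mul_X_add]
          rw [smul_eq_C_mul]; ring
        have hshift : C c * X ^ d * (X ^ j * q) =
            (c * q.coeff 0) • X ^ (j + d) + X ^ (j + d + 1) * (C c * q.divX) := by
          rw [hlow, smul_eq_C_mul, smul_eq_C_mul, C_mul]; ring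
        rw [LinearMap.sub_apply, LinearMap.comp_apply, LinearMap.mulLeft_apply, hshift, hlow,
          map_add, map_add, map_smul, map_smul, hψ _ (Dvd.intro _ rfl), hφ _ (Dvd.intro _ rfl),
          add_zero, add_zero, smul_eq_mul, smul_eq_mul, mul_right_comm, div_mul_cancel₀ _ hφn,
          mul_comm, sub_self])
    refine ⟨C c + X * k, fun p => ?_⟩
    have hkp := hk p
    rw [LinearMap.sub_apply, sub_eq_iff_eq_add, LinearMap.comp_apply, LinearMap.mulLeft_apply,
      ← map_add] at hkp
    rw [hkp]
    congr 1
    ring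

theorem exists_eq_apply_X_sq_mul {n : ℕ} {φ : F[X] →ₗ[F] F}
    (hφ : ∀ p, X ^ (n + 1) ∣ p → φ p = 0) (hφn : φ (X ^ n) ≠ 0)
    {ψ : F[X] →ₗ[F] F} (hψ : ∀ p, X ^ (n - 1) ∣ p → ψ p = 0) :
    ∃ k, ∀ p, ψ p = φ (X ^ 2 * k * p) := by
  rcases Nat.eq_zero_or_pos n with rfl | hn
  · exact ⟨0, fun p => by rw [hψ p (one_dvd _), mul_zero, zero_mul, map_zero]⟩
  · exact exists_eq_apply_X_pow_mul hφ hφn (by lia) hψ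

end DualOfTruncatedPolynomials

section Substitution

variable {R : Type*} [CommRing R] {b : R[X]}

theorem X_sq_dvd_comp_X_mul_sub (hb : X ^ 2 ∣ b - 1) (p : R[X]) :
    X ^ 2 ∣ p.comp (X * b) - p := by
  have hX : X ^ 2 ∣ X * b - X := by simpa only [mul_sub, mul_one] using hb.mul_left X
  have hsub := sub_dvd_eval_sub (X * b) X (p.map C)
  rw [eval_map, eval_map, eval₂_C_X] at hsub
  exact hX.trans hsub

theorem X_pow_dvd_comp_X_mul_mul_sub {n p : R[X]} (hb : X ^ 2 ∣ b - 1) (hn : X ^ 2 ∣ n - 1)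
    {i : ℕ} (hp : X ^ i ∣ p) : X ^ (i + 2) ∣ p.comp (X * b) * n - p := by
  obtain ⟨r, rfl⟩ := hp
  have hbi : X ^ 2 ∣ b ^ i - 1 := by simpa only [one_pow] using hb.trans (sub_dvd_pow_sub_pow b 1 i)
  have hsplit : (X ^ i * r).comp (X * b) * n - X ^ i * r =
      X ^ i * ((b ^ i - 1) * (r.comp (X * b) * n) + r.comp (X * b) * (n - 1) +
        (r.comp (X * b) - r)) := by
    rw [mul_comp, X_pow_comp]; ring
  rw [hsplit, pow_add]
  exact mul_dvd_mul_left _ (dvd_add (dvd_add (hbi.mul_right _) (hn.mul_left _))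
    (X_sq_dvd_comp_X_mul_sub hb r))

end Substitution

section Chebyshev

theorem X_sq_dvd_chebyshev_S_two_mul_sub_one (j : ℕ) :
    X ^ 2 ∣ Chebyshev.S (ZMod 2) (2 * j) - 1 := by
  suffices h : X ^ 2 ∣ Chebyshev.S (ZMod 2) (2 * j) - 1 ∧
      X ∣ Chebyshev.S (ZMod 2) (2 * j + 1) from h.1
  induction j with
  | zero => simp
  | succ j ih =>
    obtain ⟨⟨p, hp⟩, q, hq⟩ := ih
    have h2 : (2 : (ZMod 2)[X]) = 0 := CharTwo.two_eq_zero
    have heven : Chebyshev.S (ZMod 2) (2 * (j + 1 : ℕ)) - 1 = X ^ 2 * (q - p) := by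
      rw [show 2 * ((j + 1 : ℕ) : ℤ) = 2 * j + 2 by push_cast; ring, Chebyshev.S_add_two]
      linear_combination X * hq - hp - h2
    refine ⟨⟨_, heven⟩, X * (X * (q - p)) + 1 - q, ?_⟩
    rw [show 2 * ((j + 1 : ℕ) : ℤ) + 1 = 2 * j + 1 + 2 by push_cast; ring, Chebyshev.S_add_two,
      show 2 * (j : ℤ) + 1 + 1 = 2 * (j + 1 : ℕ) by push_cast; ring]
    linear_combination X * heven - hq

variable {R A : Type*} [CommRing R] [Ring A] [Algebra R A]

theorem pow_succ_eq_aeval_chebyshev_S (g : Aˣ) (n : ℕ) :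
    (g : A) ^ (n + 1) = aeval (addInv g) (Chebyshev.S R n) * g -
      aeval (addInv g) (Chebyshev.S R (n - 1)) := by
  induction n with
  | zero => simp
  | succ n ih =>
    have hsq : (g : A) * g = addInv g * g - 1 := by
      rw [addInv, add_mul, g.inv_mul, add_sub_cancel_right]
    have hX := commute_aeval (Commute.refl (addInv g)) (Chebyshev.S R n)
    have hrec : Chebyshev.S R (n + 1 : ℕ) = X * Chebyshev.S R n - Chebyshev.S R (n - 1) := by
      rw [Nat.cast_succ, Chebyshev.S_add_one]
    rw [pow_succ, ih, sub_mul, mul_assoc, hsq, hrec, Nat.cast_succ, add_sub_cancel_right, map_sub,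
      map_mul, aeval_X, hX.eq, mul_sub, sub_mul, mul_one, mul_assoc]
    abel

theorem addInv_pow_succ [Algebra (ZMod 2) A] (g : Aˣ) (n : ℕ) :
    addInv (g ^ (n + 1)) = aeval (addInv g) (X * Chebyshev.S (ZMod 2) n) := by
  have hinv : addInv g⁻¹ = addInv g := by rw [addInv, addInv, inv_inv, add_comm]
  rw [addInv, ← inv_pow, Units.val_pow_eq_pow_val, Units.val_pow_eq_pow_val,
    pow_succ_eq_aeval_chebyshev_S (R := ZMod 2), pow_succ_eq_aeval_chebyshev_S (R := ZMod 2), hinv,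
    ZModModule.sub_eq_add (G := A), ZModModule.sub_eq_add (G := A), add_add_add_comm,
    ZModModule.add_self, add_zero,
    ← mul_add, ← addInv, map_mul, aeval_X, (commute_aeval (Commute.refl (addInv g)) _).eq]

end Chebyshev

section Pairs

variable {V : Type*} [AddCommGroup V] [Module (ZMod 2) V]

/-- The map `(a, b) ↦ a(t) v + b(t) g v` with `t = g + g⁻¹`, whose image is the `g`-stable
subspace generated by `v`. -/
noncomputable def pairMap (g : (Module.End (ZMod 2) V)ˣ) (v : V) :
    (ZMod 2)[X] × (ZMod 2)[X] →ₗ[ZMod 2] V :=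
  (LinearMap.applyₗ v ∘ₗ (aeval (addInv g)).toLinearMap).coprod
    (LinearMap.applyₗ (g.val v) ∘ₗ (aeval (addInv g)).toLinearMap)

theorem pairMap_apply (g : (Module.End (ZMod 2) V)ˣ) (v : V) (x : (ZMod 2)[X] × (ZMod 2)[X]) :
    pairMap g v x = aeval (addInv g) x.1 v + aeval (addInv g) x.2 (g.val v) := rfl

/-- The action of `g` in the coordinates of `pairMap`, which comes from `g² = 1 + t g`. -/
noncomputable def pairShift : Module.End (ZMod 2) ((ZMod 2)[X] × (ZMod 2)[X]) :=
  (LinearMap.snd _ _ _).prod (LinearMap.fst _ _ _ + LinearMap.mulLeft _ X ∘ₗ LinearMap.snd _ _ _)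

theorem pairShift_apply (x : (ZMod 2)[X] × (ZMod 2)[X]) :
    pairShift x = (x.2, x.1 + X * x.2) := rfl

theorem val_mul_aeval_addInv (g : (Module.End (ZMod 2) V)ˣ) (p : (ZMod 2)[X]) (v : V) :
    g.val (aeval (addInv g) p v) = aeval (addInv g) p (g.val v) := by
  rw [← Module.End.mul_apply, (commute_aeval (commute_val_addInv g) p).eq, Module.End.mul_apply]

theorem pairMap_pairShift (g : (Module.End (ZMod 2) V)ˣ) (v : V)
    (x : (ZMod 2)[X] × (ZMod 2)[X]) : pairMap g v (pairShift x) = g.val (pairMap g v x) := by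
  have hsq : g.val (g.val v) = v + addInv g (g.val v) := by
    rw [addInv, LinearMap.add_apply, ← Module.End.mul_apply (g⁻¹).val, g.inv_mul,
      Module.End.one_apply, add_left_comm, ZModModule.add_self, add_zero]
  rw [pairMap_apply, pairMap_apply, pairShift_apply, map_add g.val, val_mul_aeval_addInv,
    val_mul_aeval_addInv, hsq, map_add (aeval (addInv g) x.2), mul_comm X, map_add, map_mul,
    aeval_X, LinearMap.add_apply, Module.End.mul_apply, add_left_comm]

theorem aeval_addInv_pairMap (g : (Module.End (ZMod 2) V)ˣ) (v : V) (p : (ZMod 2)[X])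
    (x : (ZMod 2)[X] × (ZMod 2)[X]) :
    aeval (addInv g) p (pairMap g v x) = pairMap g v (p • x) := by
  simp only [pairMap_apply, Prod.smul_fst, Prod.smul_snd, smul_eq_mul, map_add, map_mul,
    Module.End.mul_apply]

theorem exists_aeval_eq_pairMap (g : (Module.End (ZMod 2) V)ˣ) (q : (ZMod 2)[X]) :
    ∃ a b : (ZMod 2)[X], a.eval 0 + b.eval 0 = q.eval 1 ∧
      ∀ v, aeval g.val q v = pairMap g v (a, b) := by
  induction q using Polynomial.induction_on with
  | C c =>
    refine ⟨C c, 0, by simp, fun v => ?_⟩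
    simp [pairMap_apply]
  | add p q hp hq =>
    obtain ⟨a, b, hab, hp⟩ := hp
    obtain ⟨c, d, hcd, hq⟩ := hq
    refine ⟨a + c, b + d, ?_, fun v => ?_⟩
    · rw [eval_add, eval_add, eval_add, ← hab, ← hcd, add_add_add_comm]
    · rw [map_add, LinearMap.add_apply, hp, hq, ← map_add, Prod.mk_add_mk]
  | monomial n c ih =>
    obtain ⟨a, b, hab, hq⟩ := ih
    refine ⟨b, a + X * b, ?_, fun v => ?_⟩
    · rw [pow_succ, ← mul_assoc, eval_mul_X, mul_one, ← hab, eval_add, eval_mul, eval_X, zero_mul,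
        add_zero, add_comm]
    · rw [pow_succ', mul_left_comm, map_mul, aeval_X, Module.End.mul_apply, hq,
        ← pairMap_pairShift, pairShift_apply]

/-- The form `((a, b), (c, d)) ↦ μ (a d + b c)`. The Gram matrix of `pairMap g v` is of this
shape, with `μ` the functional `gramFun B g v`. -/
noncomputable def pairForm (μ : (ZMod 2)[X] →ₗ[ZMod 2] ZMod 2) :
    LinearMap.BilinForm (ZMod 2) ((ZMod 2)[X] × (ZMod 2)[X]) :=
  ((LinearMap.mul (ZMod 2) (ZMod 2)[X]).compr₂ μ).compl₁₂ (LinearMap.fst _ _ _)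
      (LinearMap.snd _ _ _) +
    ((LinearMap.mul (ZMod 2) (ZMod 2)[X]).compr₂ μ).compl₁₂ (LinearMap.snd _ _ _)
      (LinearMap.fst _ _ _)

theorem pairForm_apply (μ : (ZMod 2)[X] →ₗ[ZMod 2] ZMod 2) (x y : (ZMod 2)[X] × (ZMod 2)[X]) :
    pairForm μ x y = μ (x.1 * y.2 + x.2 * y.1) :=
  (map_add μ _ _).symm

theorem isSymm_pairForm (μ : (ZMod 2)[X] →ₗ[ZMod 2] ZMod 2) : (pairForm μ).IsSymm :=
  ⟨fun x y => by rw [pairForm_apply, pairForm_apply]; congr 1; ring⟩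

theorem pairForm_pairShift (μ : (ZMod 2)[X] →ₗ[ZMod 2] ZMod 2)
    (x y : (ZMod 2)[X] × (ZMod 2)[X]) :
    pairForm μ (pairShift x) (pairShift y) = pairForm μ x y := by
  rw [pairForm_apply, pairForm_apply]
  simp only [pairShift_apply]
  congr 1
  linear_combination X * x.2 * y.2 * CharTwo.two_eq_zero (R := (ZMod 2)[X])

theorem pairForm_smul (μ : (ZMod 2)[X] →ₗ[ZMod 2] ZMod 2) (p : (ZMod 2)[X])
    (x y : (ZMod 2)[X] × (ZMod 2)[X]) :
    pairForm μ x (p • y) = μ (p * (x.1 * y.2 + x.2 * y.1)) := by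
  rw [pairForm_apply, Prod.smul_fst, Prod.smul_snd, smul_eq_mul, smul_eq_mul]
  congr 1
  ring

variable {B : LinearMap.BilinForm (ZMod 2) V} {g : (Module.End (ZMod 2) V)ˣ}

theorem isSymm_of_isAlt (hB : B.IsAlt) : B.IsSymm :=
  ⟨fun x y => by rw [← hB.neg_eq, CharTwo.neg_eq]⟩

/-- The functional `p ↦ B (v, p(t) g v)` with `t = g + g⁻¹`. -/
noncomputable def gramFun (B : LinearMap.BilinForm (ZMod 2) V) (g : (Module.End (ZMod 2) V)ˣ)
    (v : V) : (ZMod 2)[X] →ₗ[ZMod 2] ZMod 2 :=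
  B v ∘ₗ LinearMap.applyₗ (g.val v) ∘ₗ (aeval (addInv g)).toLinearMap

theorem gramFun_apply (v : V) (p : (ZMod 2)[X]) :
    gramFun B g v p = B v (aeval (addInv g) p (g.val v)) := rfl

theorem apply_aeval_addInv_self (hB : B.IsAlt) (hg : B.IsOrthogonal g) (p : (ZMod 2)[X]) (v : V) :
    B v (aeval (addInv g) p v) = 0 := by
  have hswap : B v ((g⁻¹).val (aeval (addInv g) p.divX v)) =
      B v (g.val (aeval (addInv g) p.divX v)) := by
    rw [← isAdjointPair_inv hg, ← (isAdjointPair_aeval (isSelfAdjoint_addInv hg) p.divX),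
      (isSymm_of_isAlt hB).eq, val_mul_aeval_addInv]
  rw [← p.divX_mul_X_add, mul_comm, map_add, map_mul, aeval_X, aeval_C, LinearMap.add_apply,
    map_add, Module.algebraMap_end_apply, map_smul, hB.self_eq_zero, smul_zero, add_zero,
    Module.End.mul_apply, addInv, LinearMap.add_apply, ← addInv, map_add, hswap,
    CharTwo.add_self_eq_zero]

theorem apply_pairMap (hB : B.IsAlt) (hg : B.IsOrthogonal g) (v : V)
    (x y : (ZMod 2)[X] × (ZMod 2)[X]) :
    B (pairMap g v x) (pairMap g v y) = pairForm (gramFun B g v) x y := by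
  have hsa := fun p => isAdjointPair_aeval (isSelfAdjoint_addInv hg) p
  have hdiag : ∀ p q w, B (aeval (addInv g) p w) (aeval (addInv g) q w) = 0 := fun p q w => by
    rw [hsa, ← Module.End.mul_apply, ← map_mul, apply_aeval_addInv_self hB hg]
  have hcross : ∀ p q, B (aeval (addInv g) p v) (aeval (addInv g) q (g.val v)) =
      gramFun B g v (p * q) := fun p q => by
    rw [hsa, ← Module.End.mul_apply, ← map_mul, gramFun_apply]
  rw [pairMap_apply, pairMap_apply, map_add, map_add, LinearMap.add_apply, LinearMap.add_apply,
    hdiag, hdiag, (isSymm_of_isAlt hB).eq (aeval (addInv g) x.2 _), hcross, hcross,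
    pairForm_apply, map_add, mul_comm y.1, zero_add, add_zero, add_comm]

theorem gramFun_pairMap (hB : B.IsAlt) (hg : B.IsOrthogonal g) (v : V)
    (x : (ZMod 2)[X] × (ZMod 2)[X]) (p : (ZMod 2)[X]) :
    gramFun B g (pairMap g v x) p =
      gramFun B g v (p * (x.1 ^ 2 + x.2 ^ 2 + X * x.1 * x.2)) := by
  rw [gramFun_apply, ← pairMap_pairShift, aeval_addInv_pairMap, apply_pairMap hB hg, pairForm_smul,
    pairShift_apply]
  congr 1
  ring

theorem gramFun_pow_succ (hB : B.IsAlt) (hg : B.IsOrthogonal g) (n : ℕ) (v : V)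
    (p : (ZMod 2)[X]) :
    gramFun B (g ^ (n + 1)) v p =
      gramFun B g v (p.comp (X * Chebyshev.S _ n) * Chebyshev.S _ n) := by
  rw [gramFun_apply, addInv_pow_succ, ← aeval_comp, Units.val_pow_eq_pow_val,
    pow_succ_eq_aeval_chebyshev_S (R := ZMod 2), LinearMap.sub_apply, map_sub, map_sub,
    ← Module.End.mul_apply, ← Module.End.mul_apply, ← map_mul, apply_aeval_addInv_self hB hg,
    sub_zero, ← mul_assoc, ← map_mul, Module.End.mul_apply, gramFun_apply]

end Pairs

section CyclicBlock

variable {V W : Type*} [AddCommGroup V] [Module (ZMod 2) V] [AddCommGroup W]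
  [Module (ZMod 2) W] {B : LinearMap.BilinForm (ZMod 2) V} {g : (Module.End (ZMod 2) V)ˣ}

/-- In the `𝔽₂[X]`-module of functionals on `𝔽₂[X] ⧸ X ^ s`, the two sides are congruent modulo
`X ^ 2`. -/
theorem gramFun_pow_odd_eq (hB : B.IsAlt) (hg : B.IsOrthogonal g) (j : ℕ) {v : V} {s : ℕ}
    (hv : ∀ p, X ^ s ∣ p → gramFun B g v p = 0) {x : (ZMod 2)[X] × (ZMod 2)[X]}
    (hx : X ^ 2 ∣ x.1 ^ 2 + x.2 ^ 2 + X * x.1 * x.2 - 1) {p : (ZMod 2)[X]}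
    (hp : X ^ (s - 2) ∣ p) :
    gramFun B (g ^ (2 * j + 1)) (pairMap g v x) p = gramFun B g v p := by
  have hb := X_sq_dvd_chebyshev_S_two_mul_sub_one j
  set b := Chebyshev.S (ZMod 2) (2 * j)
  set n := x.1 ^ 2 + x.2 ^ 2 + X * x.1 * x.2
  have hn : X ^ 2 ∣ b * n - 1 := by
    rw [show b * n - 1 = (b - 1) * n + (n - 1) by ring]
    exact dvd_add (hb.mul_right _) hx
  rw [gramFun_pow_succ hB hg, gramFun_pairMap hB hg, ← sub_eq_zero, ← map_sub, mul_assoc]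
  refine hv _ ((pow_dvd_pow X ?_).trans (X_pow_dvd_comp_X_mul_mul_sub hb hn hp))
  lia

variable [FiniteDimensional (ZMod 2) V]

/-- Since `1 + t² (1 + N) = (1 + t)² (1 + t² N (1 + t)⁻²)`, the factor `1 + t` reduces this to
`isometricConj_of_norm`. -/
theorem isometricConj_of_norm_one_add (hB : B.Nondegenerate) (hg : B.IsOrthogonal g)
    (ht : IsNilpotent (addInv g)) {N : Module.End (ZMod 2) V} (hN : IsNilpotent N)
    (hNsa : B.IsSelfAdjoint N) (hgN : Commute g.val N)
    {h : Module.End (ZMod 2) V} {π p : W →ₗ[ZMod 2] V} {σ : W →ₗ[ZMod 2] W}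
    (hπ : Function.Surjective π)
    (hgram : ∀ x y, B (p x) (p y) =
      B (π x) (π y) + B (π x) ((addInv g ^ 2 * (1 + N) : Module.End (ZMod 2) V) (π y)))
    (hπσ : ∀ x, π (σ x) = g.val (π x)) (hpσ : ∀ x, p (σ x) = h (p x)) :
    IsometricConj B g h := by
  obtain ⟨s, hs⟩ := ht.isUnit_one_add
  have hgs : Commute g.val s := hs ▸ (Commute.one_right _).add_right (commute_val_addInv g)
  have hts : Commute (addInv g) s := commute_addInv hgs
  have hNs : Commute N s := hs ▸ (Commute.one_right _).add_right (commute_addInv hgN).symm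
  have hssa : B.IsSelfAdjoint s.val :=
    hs ▸ LinearMap.isAdjointPair_one.add (isSelfAdjoint_addInv hg)
  set K : Module.End (ZMod 2) V := (s⁻¹).val * N * (s⁻¹).val with hK
  have hNK : K = N * ((s⁻¹).val * (s⁻¹).val) := by
    rw [hK, ← hNs.units_inv_right.eq, mul_assoc]
  have hKsa : B.IsSelfAdjoint K := by
    have hinv := isSelfAdjoint_units_inv hssa
    have := (hinv.mul hNsa).mul hinv
    rwa [← mul_assoc] at this
  have hnorm : s.val * s.val + s.val * (addInv g ^ 2 * K) * s.val =
      1 + addInv g ^ 2 * (1 + N) := by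
    have hsq : s.val * s.val = 1 + addInv g ^ 2 := by
      rw [hs, add_mul, one_mul, mul_add, mul_one, ← sq, add_assoc, ← add_assoc (addInv g),
        ZModModule.add_self, zero_add]
    rw [← mul_assoc, ← (hts.pow_left 2).eq, mul_assoc, mul_assoc, hK, Units.inv_mul_cancel_right,
      Units.mul_inv_cancel_left, hsq, mul_add, mul_one, add_assoc]
  refine isometricConj_of_norm hB hg (K := K) (π := s.val ∘ₗ π) (p := p) (σ := σ) ?_ hKsa ?_ ?_
    (fun x y => ?_) (fun x => ?_) hpσ
  · rw [hNK]
    exact (hNs.units_inv_right.mul_right hNs.units_inv_right).isNilpotent_mul_right hN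
  · exact (hgs.units_inv_right.mul_right hgN).mul_right hgs.units_inv_right
  · exact ((Module.End.isUnit_iff _).1 s.isUnit).2.comp hπ
  · have := congrArg (fun f : Module.End (ZMod 2) V => B (π x) (f (π y))) hnorm
    simp only [LinearMap.add_apply, map_add, Module.End.one_apply] at this
    rw [hgram, ← this, LinearMap.comp_apply, LinearMap.comp_apply, hssa, hssa]
    simp only [Module.End.mul_apply]
  · rw [LinearMap.comp_apply, LinearMap.comp_apply, hπσ, ← Module.End.mul_apply,
      ← Module.End.mul_apply, hgs.eq]

theorem isometricConj_of_norm_aeval (hB : B.Nondegenerate) (hg : B.IsOrthogonal g)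
    (ht : IsNilpotent (addInv g)) (k : (ZMod 2)[X])
    {h : Module.End (ZMod 2) V} {π p : W →ₗ[ZMod 2] V} {σ : W →ₗ[ZMod 2] W}
    (hπ : Function.Surjective π)
    (hgram : ∀ x y, B (p x) (p y) = B (π x) (π y) +
      B (π x) ((addInv g ^ 2 * aeval (addInv g) k : Module.End (ZMod 2) V) (π y)))
    (hπσ : ∀ x, π (σ x) = g.val (π x)) (hpσ : ∀ x, p (σ x) = h (p x)) :
    IsometricConj B g h := by
  set N := aeval (addInv g) (k.divX * X) with hN
  have hNnil : IsNilpotent N := by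
    rw [hN, map_mul, aeval_X]
    exact (commute_aeval (Commute.refl (addInv g)) _).symm.isNilpotent_mul_left ht
  have hNsa := isAdjointPair_aeval (isSelfAdjoint_addInv hg) (k.divX * X)
  have hgN := commute_aeval (commute_val_addInv g) (k.divX * X)
  have hk0 : aeval (addInv g) k = N + algebraMap _ _ (k.coeff 0) := by
    rw [hN, ← aeval_C, ← map_add, k.divX_mul_X_add]
  have hcase : k.coeff 0 = 0 ∨ k.coeff 0 = 1 := by
    generalize k.coeff 0 = c
    decide +revert
  rcases hcase with h0 | h1
  · rw [hk0, h0, map_zero, add_zero] at hgram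
    exact isometricConj_of_norm hB hg hNnil hNsa hgN hπ hgram hπσ hpσ
  · rw [hk0, h1, map_one, add_comm N] at hgram
    exact isometricConj_of_norm_one_add hB hg ht hNnil hNsa hgN hπ hgram hπσ hpσ

theorem isometricConj_pow_odd_of_cyclic (hB : B.Nondegenerate) (halt : B.IsAlt)
    (hg : B.IsOrthogonal g) (ht : IsNilpotent (addInv g)) (j : ℕ) {v : V} {n : ℕ}
    (hv : ∀ p, X ^ (n + 1) ∣ p → gramFun B g v p = 0) (hvn : gramFun B g v (X ^ n) ≠ 0)
    (hsurj : Function.Surjective (pairMap g v)) :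
    IsometricConj B g ↑(g ^ (2 * j + 1)) := by
  have hpow : B.IsOrthogonal (g ^ (2 * j + 1)).val := by
    rw [Units.val_pow_eq_pow_val]; exact isOrthogonal_pow hg _
  have hv' : ∀ p, X ^ (n - 1) ∣ p →
      gramFun B (g ^ (2 * j + 1)) v p = gramFun B g v p := fun p hp => by
    have := gramFun_pow_odd_eq halt hg j hv (x := (1, 0)) (by simp) (p := p) (by simpa using hp)
    simpa [pairMap_apply] using this
  obtain ⟨k, hk⟩ := exists_eq_apply_X_sq_mul hv hvn
    (ψ := gramFun B (g ^ (2 * j + 1)) v - gramFun B g v)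
    fun p hp => by rw [LinearMap.sub_apply, hv' p hp, sub_self]
  have hgram : ∀ x y, B (pairMap (g ^ (2 * j + 1)) v x) (pairMap (g ^ (2 * j + 1)) v y) =
      B (pairMap g v x) (pairMap g v y) + B (pairMap g v x)
        ((addInv g ^ 2 * aeval (addInv g) k : Module.End (ZMod 2) V) (pairMap g v y)) :=
    fun x y => by
      have h2 : addInv g ^ 2 * aeval (addInv g) k = aeval (addInv g) (X ^ 2 * k) := by
        rw [map_mul, map_pow, aeval_X]
      rw [h2, aeval_addInv_pairMap, apply_pairMap halt hpow, apply_pairMap halt hg,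
        apply_pairMap halt hg, pairForm_smul, pairForm_apply, pairForm_apply, ← hk,
        LinearMap.sub_apply, add_sub_cancel]
  exact isometricConj_of_norm_aeval hB hg ht k hsurj hgram (pairMap_pairShift g v)
    (pairMap_pairShift _ v)

end CyclicBlock

section CrossGram

theorem exists_eq_apply_mul_comp {F : Type*} [Field F] {n : ℕ} {φ : F[X] →ₗ[F] F}
    (hφ : ∀ p, X ^ (n + 1) ∣ p → φ p = 0) (hφn : φ (X ^ n) ≠ 0) (z : F[X]) :
    ∃ h : F[X], h.eval 0 = 1 ∧ ∀ p, φ p = φ ((h * p).comp (X * (1 + X * z))) := by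
  set ψ : F[X] →ₗ[F] F := φ ∘ₗ (aeval (X * (1 + X * z))).toLinearMap
  have hψ_apply : ∀ p, ψ p = φ (p.comp (X * (1 + X * z))) := fun p => rfl
  have hψ : ∀ p, X ^ (n + 1) ∣ p → ψ p = 0 := by
    rintro _ ⟨q, rfl⟩
    rw [hψ_apply]
    refine hφ _ ?_
    rw [mul_comp, X_pow_comp, mul_pow, mul_assoc]
    exact dvd_mul_right _ _
  have hψn : ψ (X ^ n) = φ (X ^ n) := by
    have hb : X ∣ (1 + X * z) ^ n - 1 := by
      have := sub_dvd_pow_sub_pow (1 + X * z) 1 n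
      rw [one_pow, add_sub_cancel_left] at this
      exact (dvd_mul_right X z).trans this
    rw [hψ_apply, ← sub_eq_zero, ← map_sub, X_pow_comp, mul_pow]
    refine hφ _ ?_
    rw [← mul_sub_one, pow_succ]
    exact mul_dvd_mul_left _ hb
  obtain ⟨h, hh⟩ := exists_eq_apply_X_pow_mul hψ (hψn ▸ hφn) (add_zero _) hφ
  simp only [pow_zero, one_mul] at hh
  refine ⟨h, ?_, hh⟩
  have htop : h * X ^ n = h.eval 0 • X ^ n + X ^ (n + 1) * h.divX := by
    conv_lhs => rw [← h.divX_mul_X_add]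
    rw [smul_eq_C_mul, ← coeff_zero_eq_eval_zero]
    ring
  have := hh (X ^ n)
  rw [htop, map_add, map_smul, hψ _ (dvd_mul_right _ _), add_zero, hψn, smul_eq_mul] at this
  exact (right_eq_mul₀ hφn).1 this

theorem exists_X_add_one_pow_odd_add_one_eq (j : ℕ) :
    ∃ z : (ZMod 2)[X], (X + 1) ^ (2 * j + 1) + 1 = X * (1 + X * z) := by
  obtain ⟨z, hz⟩ := sub_dvd_pow_sub_pow (X ^ 2 + 1 : (ZMod 2)[X]) 1 j
  rw [one_pow, add_sub_cancel_right] at hz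
  refine ⟨z * (X + 1), ?_⟩
  rw [pow_succ, pow_mul, CharTwo.add_sq, one_pow]
  linear_combination (X + 1) * hz + CharTwo.two_eq_zero (R := (ZMod 2)[X])

theorem X_sq_dvd_norm_sub_one {a b : (ZMod 2)[X]} (h : a.eval 0 + b.eval 0 = 1) :
    X ^ 2 ∣ a ^ 2 + b ^ 2 + X * a * b - 1 := by
  have hadd : X ∣ a + b - 1 := by
    rw [X_dvd_iff, coeff_zero_eq_eval_zero, eval_sub, eval_add, h, eval_one, sub_self]
  have hmul : X ∣ a * b := by
    rw [X_dvd_iff, coeff_zero_eq_eval_zero, eval_mul]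
    revert h
    generalize a.eval 0 = c
    generalize b.eval 0 = d
    decide +revert
  have hsplit : a ^ 2 + b ^ 2 + X * a * b - 1 = (a + b - 1) ^ 2 + X * (a * b) := by
    linear_combination (a + b - a * b - 1) * CharTwo.two_eq_zero (R := (ZMod 2)[X])
  rw [hsplit]
  exact dvd_add (pow_dvd_pow_of_dvd hadd 2) (sq (X : (ZMod 2)[X]) ▸ mul_dvd_mul_left X hmul)

variable {V : Type*} [AddCommGroup V] [Module (ZMod 2) V]
  {B : LinearMap.BilinForm (ZMod 2) V} {g : (Module.End (ZMod 2) V)ˣ}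

/-- When `g⁻¹` is a power of `g`, the Gram matrix of two cyclic blocks is a universal expression
in `g`, so that it can be compared with the one of a power of `g`. -/
theorem exists_apply_pairMap_eq_aeval (B : LinearMap.BilinForm (ZMod 2) V) (ν : ℕ)
    (x y : (ZMod 2)[X] × (ZMod 2)[X]) :
    ∃ q : (ZMod 2)[X], ∀ g : (Module.End (ZMod 2) V)ˣ, B.IsOrthogonal g → g⁻¹ = g ^ ν →
      ∀ v w, B (pairMap g v x) (pairMap g w y) = B v (aeval g.val q w) := by
  set r : (ZMod 2)[X] × (ZMod 2)[X] → (ZMod 2)[X] := fun x =>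
    x.1.comp (X + X ^ ν) + x.2.comp (X + X ^ ν) * X
  refine ⟨(r x).comp (X ^ ν) * r y, fun g hg hν v w => ?_⟩
  have hinv : (g⁻¹).val = g.val ^ ν := by rw [hν, Units.val_pow_eq_pow_val]
  have hpair : ∀ v x, pairMap g v x = aeval g.val (r x) v := fun v x => by
    simp only [r, pairMap_apply, map_add, map_mul, aeval_comp, map_pow, aeval_X, addInv, hinv,
      LinearMap.add_apply, Module.End.mul_apply]
  rw [hpair, hpair, isAdjointPair_aeval (isAdjointPair_inv hg), map_mul, aeval_comp, map_pow,
    aeval_X, hinv, Module.End.mul_apply]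

theorem exists_pairMap_apply_aeval_pow_odd_eq (g : (Module.End (ZMod 2) V)ˣ) (j : ℕ) {n : ℕ}
    (hn : (g.val + 1) ^ (n + 1) = 0) {v w : V} (hvw : B v (((g.val + 1) ^ n) w) ≠ 0) :
    ∃ z : (ZMod 2)[X] × (ZMod 2)[X], X ^ 2 ∣ z.1 ^ 2 + z.2 ^ 2 + X * z.1 * z.2 - 1 ∧
      ∀ q : (ZMod 2)[X], B v (aeval (g.val ^ (2 * j + 1)) q (pairMap g w z)) =
        B v (aeval g.val q w) := by
  obtain ⟨z, hz⟩ := exists_X_add_one_pow_odd_add_one_eq j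
  set φ : (ZMod 2)[X] →ₗ[ZMod 2] ZMod 2 :=
    B v ∘ₗ LinearMap.applyₗ w ∘ₗ (aeval (g.val + 1)).toLinearMap
  have hφ_apply : ∀ p, φ p = B v (aeval (g.val + 1) p w) := fun p => rfl
  obtain ⟨h, hh0, hh⟩ := exists_eq_apply_mul_comp (φ := φ) (n := n)
    (by
      rintro _ ⟨q, rfl⟩
      rw [hφ_apply, map_mul, map_pow, aeval_X, hn, zero_mul, LinearMap.zero_apply, map_zero])
    (by rwa [hφ_apply, map_pow, aeval_X]) z
  obtain ⟨a, b, hab, hpair⟩ := exists_aeval_eq_pairMap g (h.comp (X ^ (2 * j + 1) + 1))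
  refine ⟨(a, b), X_sq_dvd_norm_sub_one ?_, fun q => ?_⟩
  · rw [hab, eval_comp, eval_add, eval_pow, eval_X, one_pow, eval_one, CharTwo.add_self_eq_zero,
      hh0]
  · have hshift : ∀ f : Module.End (ZMod 2) V, aeval f q = aeval (f + 1) (q.comp (X + 1)) :=
      fun f => by
        rw [aeval_comp, map_add, aeval_X, map_one, add_assoc, ZModModule.add_self, add_zero]
    have hpow : g.val ^ (2 * j + 1) + 1 = aeval (g.val + 1) (X * (1 + X * z)) := by
      rw [← hz, map_add, map_pow, map_add, aeval_X, map_one, add_assoc, ZModModule.add_self,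
        add_zero]
    have hh_aeval : aeval g.val (h.comp (X ^ (2 * j + 1) + 1)) =
        aeval (g.val ^ (2 * j + 1) + 1) h := by
      rw [aeval_comp, map_add, map_pow, aeval_X, map_one]
    rw [hshift g.val, ← hφ_apply, hh, hφ_apply, aeval_comp, ← hpow, ← hpair, hh_aeval,
      hshift (g.val ^ _), ← Module.End.mul_apply, ← map_mul, mul_comm h]

theorem exists_pairMap_gram_eq_pow_odd [Finite V] (hg : B.IsOrthogonal g) (j : ℕ) {n : ℕ}
    (hn : (g.val + 1) ^ (n + 1) = 0) {v w : V} (hvw : B v (((g.val + 1) ^ n) w) ≠ 0) :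
    ∃ z : (ZMod 2)[X] × (ZMod 2)[X], X ^ 2 ∣ z.1 ^ 2 + z.2 ^ 2 + X * z.1 * z.2 - 1 ∧
      ∀ x y, B (pairMap (g ^ (2 * j + 1)) v x) (pairMap (g ^ (2 * j + 1)) (pairMap g w z) y) =
        B (pairMap g v x) (pairMap g w y) := by
  have : Finite (Module.End (ZMod 2) V) := DFunLike.finite _
  obtain ⟨z, hz, hq⟩ := exists_pairMap_apply_aeval_pow_odd_eq g j hn hvw
  refine ⟨z, hz, fun x y => ?_⟩
  obtain ⟨ν, hν⟩ : ∃ ν : ℕ, g⁻¹ = g ^ ν := ⟨_, inv_eq_of_mul_eq_one_left (pow_orderOf_eq_one g ▸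
    (pow_sub_one_mul (orderOf_pos g).ne' g))⟩
  obtain ⟨q, hqB⟩ := exists_apply_pairMap_eq_aeval B ν x y
  have hpow : B.IsOrthogonal (g ^ (2 * j + 1)).val := by
    rw [Units.val_pow_eq_pow_val]; exact isOrthogonal_pow hg _
  rw [hqB _ hg hν, hqB _ hpow (by rw [← inv_pow, hν, ← pow_mul, ← pow_mul, mul_comm]),
    Units.val_pow_eq_pow_val, hq]

end CrossGram

section TwoGenerators

/-- The orthogonal sum of `pairForm μ` and `pairForm ν`. -/
noncomputable def pairFormSum (μ ν : (ZMod 2)[X] →ₗ[ZMod 2] ZMod 2) : LinearMap.BilinForm (ZMod 2)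
    (((ZMod 2)[X] × (ZMod 2)[X]) × ((ZMod 2)[X] × (ZMod 2)[X])) :=
  (pairForm μ).compl₁₂ (LinearMap.fst _ _ _) (LinearMap.fst _ _ _) +
    (pairForm ν).compl₁₂ (LinearMap.snd _ _ _) (LinearMap.snd _ _ _)

theorem pairFormSum_apply (μ ν : (ZMod 2)[X] →ₗ[ZMod 2] ZMod 2)
    (x y : ((ZMod 2)[X] × (ZMod 2)[X]) × ((ZMod 2)[X] × (ZMod 2)[X])) :
    pairFormSum μ ν x y = pairForm μ x.1 y.1 + pairForm ν x.2 y.2 := rfl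

theorem isSymm_pairFormSum (μ ν : (ZMod 2)[X] →ₗ[ZMod 2] ZMod 2) : (pairFormSum μ ν).IsSymm :=
  ⟨fun x y => by
    rw [pairFormSum_apply, pairFormSum_apply, (isSymm_pairForm μ).eq, (isSymm_pairForm ν).eq]⟩

theorem pairFormSum_smul_eq_zero {s : ℕ} {μ ν : (ZMod 2)[X] →ₗ[ZMod 2] ZMod 2}
    (hμ : ∀ p, X ^ s ∣ p → μ p = 0) (hν : ∀ p, X ^ s ∣ p → ν p = 0)
    (x y : ((ZMod 2)[X] × (ZMod 2)[X]) × ((ZMod 2)[X] × (ZMod 2)[X])) :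
    pairFormSum μ ν x ((X ^ s : (ZMod 2)[X]) • y) = 0 := by
  rw [pairFormSum_apply, Prod.smul_fst, Prod.smul_snd, pairForm_smul, pairForm_smul,
    hμ _ (dvd_mul_right _ _), hν _ (dvd_mul_right _ _), add_zero]

theorem exists_eq_comp_X_sq_mul {F : Type*} [Field F] {s : ℕ} {ψ : F[X] →ₗ[F] F}
    (hψ : ∀ p, X ^ (s - 2) ∣ p → ψ p = 0) :
    ∃ μ : F[X] →ₗ[F] F, (∀ p, X ^ s ∣ p → μ p = 0) ∧ ∀ p, μ (X ^ 2 * p) = ψ p := by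
  let d : F[X] →ₗ[F] F[X] := ⟨divX_hom.toAddHom, fun c p => by ext; simp [coeff_divX]⟩
  have hd : ∀ p, d p = p.divX := fun p => rfl
  refine ⟨ψ ∘ₗ d ∘ₗ d, fun p hp => hψ _ (X_pow_dvd_iff.2 fun i hi => ?_), fun p => ?_⟩
  · rw [LinearMap.comp_apply, hd, hd, coeff_divX, coeff_divX]
    exact X_pow_dvd_iff.1 hp _ (by lia)
  · rw [LinearMap.comp_apply, LinearMap.comp_apply, hd, hd]
    congr 1
    ext i
    rw [coeff_divX, coeff_divX, add_assoc, one_add_one_eq_two, coeff_X_pow_mul]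

variable {V : Type*} [AddCommGroup V] [Module (ZMod 2) V]
  {B : LinearMap.BilinForm (ZMod 2) V} {g : (Module.End (ZMod 2) V)ˣ} {v w : V}

theorem coprod_pairMap_pairShift (g : (Module.End (ZMod 2) V)ˣ) (v w : V)
    (x : ((ZMod 2)[X] × (ZMod 2)[X]) × ((ZMod 2)[X] × (ZMod 2)[X])) :
    (pairMap g v).coprod (pairMap g w) (pairShift.prodMap pairShift x) =
      g.val ((pairMap g v).coprod (pairMap g w) x) := by
  simp only [LinearMap.coprod_apply, LinearMap.prodMap_apply, pairMap_pairShift, map_add]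

theorem aeval_addInv_coprod_pairMap (g : (Module.End (ZMod 2) V)ˣ) (v w : V) (p : (ZMod 2)[X])
    (x : ((ZMod 2)[X] × (ZMod 2)[X]) × ((ZMod 2)[X] × (ZMod 2)[X])) :
    aeval (addInv g) p ((pairMap g v).coprod (pairMap g w) x) =
      (pairMap g v).coprod (pairMap g w) (p • x) := by
  simp only [LinearMap.coprod_apply, aeval_addInv_pairMap, map_add, Prod.smul_fst, Prod.smul_snd]

theorem apply_coprod_pairMap_pow_odd (halt : B.IsAlt) (hg : B.IsOrthogonal g) (j : ℕ) {w' : V}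
    (hcross : ∀ x y, B (pairMap (g ^ (2 * j + 1)) v x) (pairMap (g ^ (2 * j + 1)) w' y) =
      B (pairMap g v x) (pairMap g w y))
    (x y : ((ZMod 2)[X] × (ZMod 2)[X]) × ((ZMod 2)[X] × (ZMod 2)[X])) :
    B ((pairMap (g ^ (2 * j + 1)) v).coprod (pairMap (g ^ (2 * j + 1)) w') x)
        ((pairMap (g ^ (2 * j + 1)) v).coprod (pairMap (g ^ (2 * j + 1)) w') y) =
      B ((pairMap g v).coprod (pairMap g w) x) ((pairMap g v).coprod (pairMap g w) y) +
        pairFormSum (gramFun B (g ^ (2 * j + 1)) v - gramFun B g v)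
          (gramFun B (g ^ (2 * j + 1)) w' - gramFun B g w) x y := by
  have hpow : B.IsOrthogonal (g ^ (2 * j + 1)).val := by
    rw [Units.val_pow_eq_pow_val]; exact isOrthogonal_pow hg _
  have hsymm := isSymm_of_isAlt halt
  simp only [LinearMap.coprod_apply, map_add, LinearMap.add_apply, hcross,
    hsymm.eq (pairMap (g ^ (2 * j + 1)) w' x.2) (pairMap _ v y.1),
    hsymm.eq (pairMap g w x.2) (pairMap _ v y.1), apply_pairMap halt hpow, apply_pairMap halt hg,
    pairFormSum_apply, pairForm_apply, LinearMap.sub_apply]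
  ring

theorem exists_gramCorrection [FiniteDimensional (ZMod 2) V] (hB : B.Nondegenerate)
    (halt : B.IsAlt) (hg : B.IsOrthogonal g)
    (hsurj : Function.Surjective ((pairMap g v).coprod (pairMap g w))) {s : ℕ}
    (hker : ∀ x, (pairMap g v).coprod (pairMap g w) x = 0 → ∃ y, x = (X ^ s : (ZMod 2)[X]) • y)
    {μ ν : (ZMod 2)[X] →ₗ[ZMod 2] ZMod 2} (hμ : ∀ p, X ^ s ∣ p → μ p = 0)
    (hν : ∀ p, X ^ s ∣ p → ν p = 0) :
    ∃ K : Module.End (ZMod 2) V, B.IsSelfAdjoint K ∧ Commute g.val K ∧ addInv g ^ s * K = 0 ∧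
      ∀ x y, B (K ((pairMap g v).coprod (pairMap g w) x)) ((pairMap g v).coprod (pairMap g w) y) =
        pairFormSum μ ν x y := by
  have hsymm := isSymm_pairFormSum μ ν
  have hzero := pairFormSum_smul_eq_zero hμ hν
  obtain ⟨K, hK⟩ := exists_endomorphism_of_bilinForm hB hsurj (D := pairFormSum μ ν)
    (fun x y hx => by obtain ⟨x, rfl⟩ := hker x hx; rw [hsymm.eq, hzero])
    (fun x y hy => by obtain ⟨y, rfl⟩ := hker y hy; exact hzero x y)
  refine ⟨K, isSelfAdjoint_of_gram (isSymm_of_isAlt halt) hsurj hsymm hK, ?_, ?_, hK⟩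
  · refine commute_of_gram hB hg hsurj (coprod_pairMap_pairShift g v w) (fun x y => ?_) hK
    rw [pairFormSum_apply, pairFormSum_apply, LinearMap.prodMap_apply, LinearMap.prodMap_apply,
      pairForm_pairShift, pairForm_pairShift]
  · have hts : aeval (addInv g) (X ^ s : (ZMod 2)[X]) = addInv g ^ s := by rw [map_pow, aeval_X]
    refine LinearMap.ext fun u => hB.1 _ fun u' => ?_
    obtain ⟨x, rfl⟩ := hsurj u
    obtain ⟨y, rfl⟩ := hsurj u'
    rw [← hts, Module.End.mul_apply, isAdjointPair_aeval (isSelfAdjoint_addInv hg),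
      aeval_addInv_coprod_pairMap, hK, hzero]

theorem isNilpotent_of_addInv_pow_mul_eq_zero {n s : ℕ} (hs : 2 * s ≤ n)
    (hn : (g.val + 1) ^ (n + 1) = 0)
    (hrange : ∀ x, ((g.val + 1) ^ n) x = 0 → x ∈ LinearMap.range (g.val + 1))
    {K : Module.End (ZMod 2) V} (hgK : Commute g.val K) (hK : addInv g ^ s * K = 0) :
    IsNilpotent K := by
  obtain ⟨e, rfl⟩ := Nat.exists_eq_add_of_le' hs
  have hzero : (g.val + 1) ^ (e + 2 * s) * K = 0 := by
    rw [pow_add, pow_mul, add_one_sq_eq_mul_addInv, (commute_val_addInv g).mul_pow, mul_assoc,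
      mul_assoc, hK, mul_zero, mul_zero]
  refine isNilpotent_of_range_le (hgK.symm.add_right (Commute.one_right K)) ⟨_, hn⟩ ?_
  rintro _ ⟨x, rfl⟩
  exact hrange _ (LinearMap.congr_fun hzero x)

theorem isometricConj_pow_odd_of_pair [Finite V] (hB : B.Nondegenerate) (halt : B.IsAlt)
    (hg : B.IsOrthogonal g) (j : ℕ) {n s : ℕ} (hs : 2 * s ≤ n) (hn : (g.val + 1) ^ (n + 1) = 0)
    (hvw : B v (((g.val + 1) ^ n) w) ≠ 0)
    (hgram : ∀ x p, X ^ s ∣ p → gramFun B g x p = 0)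
    (hsurj : Function.Surjective ((pairMap g v).coprod (pairMap g w)))
    (hker : ∀ x, (pairMap g v).coprod (pairMap g w) x = 0 → ∃ y, x = (X ^ s : (ZMod 2)[X]) • y)
    (hrange : ∀ x, ((g.val + 1) ^ n) x = 0 → x ∈ LinearMap.range (g.val + 1)) :
    IsometricConj B g ↑(g ^ (2 * j + 1)) := by
  obtain ⟨z, hz, hcross⟩ := exists_pairMap_gram_eq_pow_odd hg j hn hvw
  obtain ⟨μ, hμ, hμv⟩ := exists_eq_comp_X_sq_mul (s := s)
    (ψ := gramFun B (g ^ (2 * j + 1)) v - gramFun B g v) fun p hp => by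
      have := gramFun_pow_odd_eq halt hg j (hgram v) (x := (1, 0)) (by simp) hp
      simpa [pairMap_apply, sub_eq_zero] using this
  obtain ⟨ν, hν, hνw⟩ := exists_eq_comp_X_sq_mul (s := s)
    (ψ := gramFun B (g ^ (2 * j + 1)) (pairMap g w z) - gramFun B g w) fun p hp => by
      rw [LinearMap.sub_apply, gramFun_pow_odd_eq halt hg j (hgram w) hz hp, sub_self]
  obtain ⟨K, hKsa, hgK, htK, hK⟩ := exists_gramCorrection hB halt hg hsurj hker hμ hν
  have hKnil := isNilpotent_of_addInv_pow_mul_eq_zero hs hn hrange hgK htK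
  refine isometricConj_of_norm hB hg hKnil hKsa hgK hsurj
    (p := (pairMap (g ^ (2 * j + 1)) v).coprod (pairMap (g ^ (2 * j + 1)) (pairMap g w z)))
    (fun x y => ?_) (coprod_pairMap_pairShift g v w) (coprod_pairMap_pairShift _ v _)
  have hX : addInv g ^ 2 = aeval (addInv g) (X ^ 2 : (ZMod 2)[X]) := by rw [map_pow, aeval_X]
  rw [apply_coprod_pairMap_pow_odd halt hg j hcross, ((commute_addInv hgK).pow_left 2).eq,
    Module.End.mul_apply, ← hKsa, hX, aeval_addInv_coprod_pairMap, hK, pairFormSum_apply,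
    pairFormSum_apply, Prod.smul_fst, Prod.smul_snd, pairForm_smul, pairForm_smul, hμv, hνw,
    pairForm_apply, pairForm_apply]

end TwoGenerators

section TopPower

variable {A : Type*} [Ring A] [Algebra (ZMod 2) A]

theorem add_one_pow_two_mul (g : Aˣ) (i : ℕ) :
    ((g : A) + 1) ^ (2 * i) = ↑(g ^ i) * addInv g ^ i := by
  rw [pow_mul, add_one_sq_eq_mul_addInv, (commute_val_addInv g).mul_pow, Units.val_pow_eq_pow_val]

theorem addInv_pow_eq_zero {g : Aˣ} {i : ℕ} (h : ((g : A) + 1) ^ (2 * i) = 0) :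
    addInv g ^ i = 0 := by
  rwa [add_one_pow_two_mul, Units.mul_right_eq_zero] at h

theorem add_one_pow_eq_addInv_pow_mul {g : Aˣ} {i e : ℕ}
    (h : ((g : A) + 1) ^ (2 * i + e + 1) = 0) :
    ((g : A) + 1) ^ (2 * i + e) = addInv g ^ i * ((g : A) + 1) ^ e := by
  have hcomm : Commute (g : A) (addInv g ^ i * ((g : A) + 1) ^ e) :=
    ((commute_val_addInv g).pow_right i).mul_right
      (((Commute.refl (g : A)).add_right (Commute.one_right _)).pow_right e)
  have hpow : ((g : A) + 1) ^ (2 * i + e) = ↑(g ^ i) * (addInv g ^ i * ((g : A) + 1) ^ e) := by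
    rw [pow_add, add_one_pow_two_mul, mul_assoc]
  have hfix : (g : A) * (addInv g ^ i * ((g : A) + 1) ^ e) =
      addInv g ^ i * ((g : A) + 1) ^ e := by
    rw [pow_succ, hpow, mul_assoc, Units.mul_right_eq_zero, mul_add, mul_one, ← hcomm.eq] at h
    rwa [← sub_eq_zero, ZModModule.sub_eq_add]
  have hfix_pow : ∀ k, ((g ^ k : Aˣ) : A) * (addInv g ^ i * ((g : A) + 1) ^ e) =
      addInv g ^ i * ((g : A) + 1) ^ e := fun k => by
    induction k with
    | zero => rw [pow_zero, Units.val_one, one_mul]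
    | succ k ih => rw [pow_succ, Units.val_mul, mul_assoc, hfix, ih]
  rw [hpow, hfix_pow]

variable {V : Type*} [AddCommGroup V] [Module (ZMod 2) V]
  {B : LinearMap.BilinForm (ZMod 2) V} {g : (Module.End (ZMod 2) V)ˣ}

theorem apply_addInv_pow_self (halt : B.IsAlt) (hg : B.IsOrthogonal g) (i : ℕ) (x : V) :
    B x ((addInv g ^ i) x) = 0 := by
  have := apply_aeval_addInv_self halt hg (X ^ i) x
  rwa [map_pow, aeval_X] at this

theorem apply_add_one_pow_even_self (halt : B.IsAlt) (hg : B.IsOrthogonal g) {i : ℕ}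
    (h : (g.val + 1) ^ (2 * i + 1) = 0) (x : V) : B x (((g.val + 1) ^ (2 * i)) x) = 0 := by
  rw [← add_zero (2 * i), add_one_pow_eq_addInv_pow_mul h, pow_zero, mul_one,
    apply_addInv_pow_self halt hg]

theorem apply_add_one_pow_odd_self (halt : B.IsAlt) (hg : B.IsOrthogonal g) {i : ℕ}
    (h : (g.val + 1) ^ (2 * i + 1 + 1) = 0) (x : V) :
    B x (((g.val + 1) ^ (2 * i + 1)) x) = gramFun B g x (X ^ i) := by
  rw [add_one_pow_eq_addInv_pow_mul h, pow_one, mul_add, mul_one, LinearMap.add_apply, map_add,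
    apply_addInv_pow_self halt hg, add_zero, gramFun_apply, map_pow, aeval_X, Module.End.mul_apply]

theorem gramFun_eq_zero_of_add_one_pow {i : ℕ} (h : (g.val + 1) ^ (2 * i) = 0) (x : V)
    {p : (ZMod 2)[X]} (hp : X ^ i ∣ p) : gramFun B g x p = 0 := by
  obtain ⟨q, rfl⟩ := hp
  rw [gramFun_apply, map_mul, map_pow, aeval_X, addInv_pow_eq_zero h, zero_mul,
    LinearMap.zero_apply, map_zero]

theorem gramFun_eq_zero_of_top_isAlt (halt : B.IsAlt) (hg : B.IsOrthogonal g) {n : ℕ}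
    (hn : (g.val + 1) ^ (n + 1) = 0) (htop : ∀ x, B x (((g.val + 1) ^ n) x) = 0) (x : V)
    {p : (ZMod 2)[X]} (hp : X ^ (n / 2) ∣ p) : gramFun B g x p = 0 := by
  obtain ⟨q, rfl⟩ := hp
  obtain ⟨i, rfl | rfl⟩ := n.even_or_odd'
  · have hfix : addInv g ^ i * g.val = addInv g ^ i := by
      have := add_one_pow_eq_addInv_pow_mul (e := 0) hn
      rw [add_zero, pow_zero, mul_one] at this
      rw [pow_succ, this, mul_add, mul_one] at hn
      rwa [← sub_eq_zero, ZModModule.sub_eq_add]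
    rw [Nat.mul_div_cancel_left _ two_pos, gramFun_apply, mul_comm, ← Module.End.mul_apply, map_mul,
      map_pow, aeval_X, mul_assoc, hfix]
    have := apply_aeval_addInv_self halt hg (q * X ^ i) x
    rwa [map_mul, map_pow, aeval_X] at this
  · have hsplit : (X : (ZMod 2)[X]) ^ i * q = q.coeff 0 • X ^ i + X ^ (i + 1) * q.divX := by
      conv_lhs => rw [← q.divX_mul_X_add]
      rw [smul_eq_C_mul]; ring
    rw [show (2 * i + 1) / 2 = i by lia, hsplit, map_add, map_smul,
      ← apply_add_one_pow_odd_self halt hg hn, htop, smul_zero, zero_add,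
      gramFun_eq_zero_of_add_one_pow hn x (dvd_mul_right _ _)]

end TopPower

section UnipotentBlocks

theorem eq_zero_of_isAlt_of_apply_eq_zero {F V : Type*} [Field F] [AddCommGroup V] [Module F V]
    {C : LinearMap.BilinForm F V} (hC : C.IsAlt) {v w : V} (hvw : C v w ≠ 0) {c d : F}
    (hv : C v (c • v + d • w) = 0) (hw : C w (c • v + d • w) = 0) : c = 0 ∧ d = 0 := by
  rw [map_add, map_smul, map_smul, hC.self_eq_zero, smul_zero, zero_add, smul_eq_mul] at hv
  rw [map_add, map_smul, map_smul, hC.self_eq_zero, smul_zero, add_zero, smul_eq_mul,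
    ← hC.neg_eq] at hw
  exact ⟨(mul_eq_zero.1 hw).resolve_right (neg_ne_zero.2 hvw), (mul_eq_zero.1 hv).resolve_right hvw⟩

variable {V : Type*} [AddCommGroup V] [Module (ZMod 2) V]
  {B : LinearMap.BilinForm (ZMod 2) V} {g : (Module.End (ZMod 2) V)ˣ} {v w : V} {n : ℕ}

theorem exists_pairMap_eq (g : (Module.End (ZMod 2) V)ˣ) (v : V)
    (x : (ZMod 2)[X] × (ZMod 2)[X]) :
    ∃ z, pairMap g v x = (x.1.eval 0 + x.2.eval 0) • v +
      (g.val + 1) (x.2.eval 0 • v + (g.val + 1) z) := by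
  have hsq : addInv g = (g.val + 1) * ((g.val + 1) * (g⁻¹).val) := by
    rw [← mul_assoc, ← sq, add_one_sq_eq_mul_addInv, (commute_val_addInv g).eq, mul_assoc,
      g.mul_inv, mul_one]
  have hsplit : ∀ (p : (ZMod 2)[X]) u,
      aeval (addInv g) p u = p.eval 0 • u + addInv g (aeval (addInv g) p.divX u) := fun p u => by
      conv_lhs => rw [← p.divX_mul_X_add]
      rw [map_add, mul_comm, map_mul, aeval_X, aeval_C, coeff_zero_eq_eval_zero, add_comm,
        LinearMap.add_apply, Module.algebraMap_end_apply, Module.End.mul_apply]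
  refine ⟨(g⁻¹).val (pairMap g v (x.1.divX, x.2.divX)), ?_⟩
  have ht := LinearMap.congr_fun hsq (pairMap g v (x.1.divX, x.2.divX))
  rw [Module.End.mul_apply, Module.End.mul_apply] at ht
  have hchar : x.2.eval 0 • v + x.2.eval 0 • v = 0 := ZModModule.add_self _
  rw [map_add (g.val + 1), ← ht, pairMap_apply, pairMap_apply, hsplit x.1, hsplit x.2, map_add,
    LinearMap.add_apply, Module.End.one_apply, add_smul, map_smul]
  nth_rw 1 [← add_zero (x.1.eval 0 • v), ← hchar]
  abel

/-- A degenerate vector would lie in the range of every power of `g + 1`. -/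
theorem nondegenerate_of_top_radical_le (hsymm : B.IsSymm) (hg : B.IsOrthogonal g)
    (hn : (g.val + 1) ^ (n + 1) = 0)
    (h : ∀ z, (∀ x, B x (((g.val + 1) ^ n) z) = 0) → z ∈ LinearMap.range (g.val + 1)) :
    B.Nondegenerate := by
  have hright : B.SeparatingRight := fun y hy => by
    have hrange : ∀ i ≤ n + 1, ∃ z, y = ((g.val + 1) ^ i) z := fun i => by
      induction i with
      | zero => exact fun _ => ⟨y, rfl⟩
      | succ i ih =>
        intro hi
        obtain ⟨z, rfl⟩ := ih (by lia)
        obtain ⟨z, rfl⟩ := h z fun x => by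
          have hadj := isAdjointPair_aeval (isAdjointPair_inv' hg) ((X + 1) ^ (n - i)) x
          simp only [map_pow, map_add, aeval_X, map_one] at hadj
          rw [← Nat.sub_add_cancel (Nat.lt_succ_iff.1 hi), pow_add, Module.End.mul_apply, ← hadj,
            hy]
        exact ⟨z, by rw [pow_succ, Module.End.mul_apply]⟩
    obtain ⟨z, rfl⟩ := hrange _ le_rfl
    rw [hn, LinearMap.zero_apply]
  exact ⟨fun x hx => hright x fun y => by rw [hsymm.eq, hx], hright⟩

theorem nondegenerate_of_cyclic (hsymm : B.IsSymm) (hg : B.IsOrthogonal g)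
    (hn : (g.val + 1) ^ (n + 1) = 0) (hv : B v (((g.val + 1) ^ n) v) ≠ 0)
    (hsurj : Function.Surjective (pairMap g v)) : B.Nondegenerate := by
  refine nondegenerate_of_top_radical_le hsymm hg hn fun z hz => ?_
  obtain ⟨x, rfl⟩ := hsurj z
  obtain ⟨u, hu⟩ := exists_pairMap_eq g v x
  have hzero := hz v
  rw [hu, map_add, ← Module.End.mul_apply, ← pow_succ, hn, LinearMap.zero_apply, add_zero, map_smul,
    map_smul, smul_eq_mul, mul_eq_zero, or_iff_left hv] at hzero
  exact ⟨_, by rw [hu, hzero, zero_smul, zero_add]⟩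

theorem isometricConj_pow_odd_of_cyclic_top [FiniteDimensional (ZMod 2) V] (halt : B.IsAlt)
    (hg : B.IsOrthogonal g) (j : ℕ) (hn : (g.val + 1) ^ (n + 1) = 0)
    (hv : B v (((g.val + 1) ^ n) v) ≠ 0) (hsurj : Function.Surjective (pairMap g v)) :
    IsometricConj B g ↑(g ^ (2 * j + 1)) := by
  have hB := nondegenerate_of_cyclic (isSymm_of_isAlt halt) hg hn hv hsurj
  obtain ⟨i, rfl | rfl⟩ := n.even_or_odd'
  · exact absurd (apply_add_one_pow_even_self halt hg hn v) hv
  · rw [apply_add_one_pow_odd_self halt hg hn] at hv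
    exact isometricConj_pow_odd_of_cyclic hB halt hg ⟨i + 1, addInv_pow_eq_zero hn⟩ j
      (fun p => gramFun_eq_zero_of_add_one_pow hn v) hv hsurj

theorem exists_coprod_pairMap_eq (g : (Module.End (ZMod 2) V)ˣ) (v w : V)
    (x : ((ZMod 2)[X] × (ZMod 2)[X]) × ((ZMod 2)[X] × (ZMod 2)[X])) :
    ∃ z, (pairMap g v).coprod (pairMap g w) x =
      ((x.1.1.eval 0 + x.1.2.eval 0) • v + (x.2.1.eval 0 + x.2.2.eval 0) • w) +
        (g.val + 1) ((x.1.2.eval 0 • v + x.2.2.eval 0 • w) + (g.val + 1) z) := by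
  obtain ⟨a, ha⟩ := exists_pairMap_eq g v x.1
  obtain ⟨b, hb⟩ := exists_pairMap_eq g w x.2
  refine ⟨a + b, ?_⟩
  rw [LinearMap.coprod_apply, ha, hb, map_add (g.val + 1) a b, add_add_add_comm, ← map_add,
    add_add_add_comm (x.1.2.eval 0 • v)]

theorem add_one_pow_apply_add_one (hn : (g.val + 1) ^ (n + 1) = 0) (z : V) :
    ((g.val + 1) ^ n) ((g.val + 1) z) = 0 := by
  rw [← Module.End.mul_apply, ← pow_succ, hn, LinearMap.zero_apply]

/-- The coordinates vanish to first order because the top form `B (x, (g + 1)ⁿ y)` is alternating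
and pairs `v` and `w` nontrivially. -/
theorem exists_coprod_pairMap_eq_add_one (htop : ∀ x, B x (((g.val + 1) ^ n) x) = 0)
    (hn : (g.val + 1) ^ (n + 1) = 0) (hvw : B v (((g.val + 1) ^ n) w) ≠ 0)
    {x : ((ZMod 2)[X] × (ZMod 2)[X]) × ((ZMod 2)[X] × (ZMod 2)[X])}
    (hx : ∀ u, B u (((g.val + 1) ^ n) ((pairMap g v).coprod (pairMap g w) x)) = 0) :
    (x.1.1.eval 0 + x.1.2.eval 0 = 0 ∧ x.2.1.eval 0 + x.2.2.eval 0 = 0) ∧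
      ∃ z, (pairMap g v).coprod (pairMap g w) x =
        (g.val + 1) ((x.1.2.eval 0 • v + x.2.2.eval 0 • w) + (g.val + 1) z) := by
  have hC : (B.compl₂ ((g.val + 1) ^ n)).IsAlt := htop
  obtain ⟨z, hz⟩ := exists_coprod_pairMap_eq g v w x
  rw [hz, map_add ((g.val + 1) ^ n), add_one_pow_apply_add_one hn, add_zero] at hx
  obtain ⟨hv, hw⟩ := eq_zero_of_isAlt_of_apply_eq_zero hC hvw (hx v) (hx w)
  exact ⟨⟨hv, hw⟩, z, by rw [hz, hv, hw, zero_smul, zero_smul, zero_add, zero_add]⟩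

theorem exists_eq_X_smul (htop : ∀ x, B x (((g.val + 1) ^ (n + 1)) x) = 0)
    (hn : (g.val + 1) ^ (n + 1 + 1) = 0) (hvw : B v (((g.val + 1) ^ (n + 1)) w) ≠ 0)
    {x : ((ZMod 2)[X] × (ZMod 2)[X]) × ((ZMod 2)[X] × (ZMod 2)[X])}
    (hx : ((g.val + 1) ^ n) ((pairMap g v).coprod (pairMap g w) x) = 0) :
    ∃ y, x = (X : (ZMod 2)[X]) • y := by
  have hC : (B.compl₂ ((g.val + 1) ^ (n + 1))).IsAlt := htop
  obtain ⟨⟨hv, hw⟩, z, hz⟩ := exists_coprod_pairMap_eq_add_one htop hn hvw fun u => by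
    rw [pow_succ', Module.End.mul_apply, hx, map_zero, map_zero]
  rw [hz, ← Module.End.mul_apply, ← pow_succ, map_add, add_one_pow_apply_add_one hn,
    add_zero] at hx
  obtain ⟨hv2, hw2⟩ := eq_zero_of_isAlt_of_apply_eq_zero hC (c := x.1.2.eval 0)
    (d := x.2.2.eval 0) hvw (by rw [LinearMap.compl₂_apply, hx, map_zero])
    (by rw [LinearMap.compl₂_apply, hx, map_zero])
  rw [hv2, add_zero] at hv
  rw [hw2, add_zero] at hw
  have hX : ∀ p : (ZMod 2)[X], p.eval 0 = 0 → p = X • p.divX := fun p hp => by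
    conv_lhs => rw [← X_mul_divX_add p, coeff_zero_eq_eval_zero, hp, C_0, add_zero]
    rw [smul_eq_mul]
  exact ⟨((x.1.1.divX, x.1.2.divX), (x.2.1.divX, x.2.2.divX)),
    Prod.ext (Prod.ext (hX _ hv) (hX _ hv2)) (Prod.ext (hX _ hw) (hX _ hw2))⟩

theorem exists_eq_X_pow_smul (htop : ∀ x, B x (((g.val + 1) ^ n) x) = 0)
    (hn : (g.val + 1) ^ (n + 1) = 0) (hvw : B v (((g.val + 1) ^ n) w) ≠ 0) {i : ℕ}
    (hi : 2 * i ≤ n) {x : ((ZMod 2)[X] × (ZMod 2)[X]) × ((ZMod 2)[X] × (ZMod 2)[X])}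
    (hx : (pairMap g v).coprod (pairMap g w) x = 0) : ∃ y, x = (X ^ i : (ZMod 2)[X]) • y := by
  induction i with
  | zero => exact ⟨x, by rw [pow_zero, one_smul]⟩
  | succ i ih =>
    obtain ⟨y, rfl⟩ := ih (by lia)
    obtain ⟨m, rfl⟩ : ∃ m, n = m + 2 * i + 1 + 1 := ⟨n - 2 * (i + 1), by lia⟩
    rw [← aeval_addInv_coprod_pairMap, map_pow, aeval_X] at hx
    obtain ⟨y, rfl⟩ := exists_eq_X_smul htop hn hvw (x := y) (by
      rw [add_right_comm, pow_add, add_one_pow_two_mul, Module.End.mul_apply,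
        Module.End.mul_apply, hx, map_zero, map_zero])
    exact ⟨y, by rw [smul_smul, pow_succ]⟩

theorem mem_range_add_one_of_top_apply_eq_zero (htop : ∀ x, B x (((g.val + 1) ^ n) x) = 0)
    (hn : (g.val + 1) ^ (n + 1) = 0) (hvw : B v (((g.val + 1) ^ n) w) ≠ 0)
    (hsurj : Function.Surjective ((pairMap g v).coprod (pairMap g w))) {z : V}
    (hz : ∀ x, B x (((g.val + 1) ^ n) z) = 0) : z ∈ LinearMap.range (g.val + 1) := by
  obtain ⟨x, rfl⟩ := hsurj z
  obtain ⟨-, u, hu⟩ := exists_coprod_pairMap_eq_add_one htop hn hvw hz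
  exact ⟨_, hu.symm⟩

theorem nondegenerate_of_pair (hsymm : B.IsSymm) (hg : B.IsOrthogonal g)
    (htop : ∀ x, B x (((g.val + 1) ^ n) x) = 0)
    (hn : (g.val + 1) ^ (n + 1) = 0) (hvw : B v (((g.val + 1) ^ n) w) ≠ 0)
    (hsurj : Function.Surjective ((pairMap g v).coprod (pairMap g w))) : B.Nondegenerate :=
  nondegenerate_of_top_radical_le hsymm hg hn fun _ =>
    mem_range_add_one_of_top_apply_eq_zero htop hn hvw hsurj

theorem isometricConj_pow_odd_of_pair_top [Finite V] (halt : B.IsAlt)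
    (hg : B.IsOrthogonal g) (j : ℕ) (htop : ∀ x, B x (((g.val + 1) ^ n) x) = 0)
    (hn : (g.val + 1) ^ (n + 1) = 0) (hvw : B v (((g.val + 1) ^ n) w) ≠ 0)
    (hsurj : Function.Surjective ((pairMap g v).coprod (pairMap g w))) :
    IsometricConj B g ↑(g ^ (2 * j + 1)) := by
  have hs : 2 * (n / 2) ≤ n := Nat.mul_div_le n 2
  refine isometricConj_pow_odd_of_pair
    (nondegenerate_of_pair (isSymm_of_isAlt halt) hg htop hn hvw hsurj) halt hg j hs hn hvw
    (fun x _ => gramFun_eq_zero_of_top_isAlt halt hg hn htop x) hsurj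
    (fun x => exists_eq_X_pow_smul htop hn hvw hs) fun z hz =>
      mem_range_add_one_of_top_apply_eq_zero htop hn hvw hsurj fun x => by rw [hz, map_zero]

end UnipotentBlocks

section Restriction

variable {F V U : Type*} [Field F] [AddCommGroup V] [Module F V] [AddCommGroup U] [Module F U]

theorem map_aeval_of_map_apply {ι : U →ₗ[F] V} {f' : Module.End F U} {f : Module.End F V}
    (h : ∀ x, ι (f' x) = f (ι x)) (p : F[X]) (x : U) : ι (aeval f' p x) = aeval f p (ι x) := by
  induction p using Polynomial.induction_on' with
  | add p q hp hq =>
    rw [map_add, map_add, LinearMap.add_apply, LinearMap.add_apply, map_add, hp, hq]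
  | monomial n a =>
    have hpow : ∀ y, ι ((f' ^ n) y) = (f ^ n) (ι y) := fun y => by
      induction n generalizing y with
      | zero => rfl
      | succ n ih => rw [pow_succ, pow_succ, Module.End.mul_apply, Module.End.mul_apply, ih, h]
    rw [aeval_monomial, aeval_monomial, ← Algebra.smul_def, ← Algebra.smul_def,
      LinearMap.smul_apply, LinearMap.smul_apply, map_smul, hpow]

theorem map_units_inv_of_map_apply {ι : U →ₗ[F] V} {g' : (Module.End F U)ˣ}
    {g : (Module.End F V)ˣ} (h : ∀ x, ι (g'.val x) = g.val (ι x)) (x : U) :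
    ι ((g'⁻¹).val x) = (g⁻¹).val (ι x) := by
  have hx : g.val (ι ((g'⁻¹).val x)) = ι x := by
    rw [← h, ← Module.End.mul_apply, g'.mul_inv, Module.End.one_apply]
  rw [← hx, ← Module.End.mul_apply, g.inv_mul, Module.End.one_apply]

theorem map_addInv_of_map_apply {ι : U →ₗ[F] V} {g' : (Module.End F U)ˣ}
    {g : (Module.End F V)ˣ} (h : ∀ x, ι (g'.val x) = g.val (ι x)) (x : U) :
    ι (addInv g' x) = addInv g (ι x) := by
  rw [addInv, addInv, LinearMap.add_apply, LinearMap.add_apply, map_add, h,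
    map_units_inv_of_map_apply h]

theorem map_pow_of_map_apply {ι : U →ₗ[F] V} {f' : Module.End F U} {f : Module.End F V}
    (h : ∀ x, ι (f' x) = f (ι x)) (n : ℕ) (x : U) : ι ((f' ^ n) x) = (f ^ n) (ι x) := by
  have := map_aeval_of_map_apply h (X ^ n) x
  rwa [map_pow, map_pow, aeval_X, aeval_X] at this

theorem map_add_one_pow_of_map_apply {ι : U →ₗ[F] V} {f' : Module.End F U} {f : Module.End F V}
    (h : ∀ x, ι (f' x) = f (ι x)) (n : ℕ) (x : U) :
    ι (((f' + 1) ^ n) x) = ((f + 1) ^ n) (ι x) :=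
  map_pow_of_map_apply (fun y => by
    rw [LinearMap.add_apply, LinearMap.add_apply, map_add, h, Module.End.one_apply,
      Module.End.one_apply]) n x

variable {U W : Submodule F V} {B : LinearMap.BilinForm F V}

theorem nondegenerate_restrict_of_isCompl (hB : B.Nondegenerate) (hsymm : B.IsSymm)
    (hUW : IsCompl U W) (horth : ∀ x ∈ U, ∀ y ∈ W, B x y = 0) : (B.restrict U).Nondegenerate := by
  have hsep : (B.restrict U).SeparatingLeft := fun x hx => Subtype.ext <| hB.1 x fun y => by
    obtain ⟨u, hu, w, hw, rfl⟩ := Submodule.mem_sup.1 (hUW.sup_eq_top ▸ Submodule.mem_top (x := y))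
    rw [map_add, horth x x.2 w hw, add_zero]
    exact hx ⟨u, hu⟩
  exact ⟨hsep, fun y hy => hsep y fun x => by rw [(hsymm.restrict U).eq, hy]⟩

variable [FiniteDimensional F V]

theorem exists_units_restrict {g : (Module.End F V)ˣ} (hU : ∀ x ∈ U, g.val x ∈ U) :
    ∃ g' : (Module.End F U)ˣ, ∀ x, (g'.val x : V) = g.val x := by
  have hinj : Function.Injective (g.val.restrict hU) := fun x y hxy =>
    Subtype.ext (((Module.End.isUnit_iff _).1 g.isUnit).1 (congrArg Subtype.val hxy))
  exact ⟨(isUnit_of_injective hinj).unit, fun x => rfl⟩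

theorem isometricConj_of_isCompl (hB : B.Nondegenerate) (hsymm : B.IsSymm) (hUW : IsCompl U W)
    (horth : ∀ x ∈ U, ∀ y ∈ W, B x y = 0) {f h : Module.End F V}
    {fU hU : Module.End F U} {fW hW : Module.End F W}
    (hfU : ∀ x, (fU x : V) = f x) (hhU : ∀ x, (hU x : V) = h x)
    (hfW : ∀ x, (fW x : V) = f x) (hhW : ∀ x, (hW x : V) = h x)
    (hconjU : IsometricConj (B.restrict U) fU hU) (hconjW : IsometricConj (B.restrict W) fW hW) :
    IsometricConj B f h := by
  obtain ⟨S, hSf, hS⟩ := hconjU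
  obtain ⟨T, hTf, hT⟩ := hconjW
  refine isometricConj_of_gram_eq hB (π := U.subtype.coprod W.subtype)
    (p := (U.subtype ∘ₗ S).coprod (W.subtype ∘ₗ T)) (σ := fU.prodMap fW) ?_ ?_ ?_ ?_
  · rw [← LinearMap.range_eq_top, LinearMap.range_coprod, U.range_subtype, W.range_subtype,
      hUW.sup_eq_top]
  · rintro ⟨u, w⟩ ⟨u', w'⟩
    have hortho : ∀ (x : U) (y : W), B x y = 0 := fun x y => horth x x.2 y y.2
    have hortho' : ∀ (x : U) (y : W), B y x = 0 := fun x y => by rw [hsymm.eq, hortho]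
    have hSu : B (S u : V) (S u' : V) = B (u : V) (u' : V) := hS u u'
    have hTw : B (T w : V) (T w' : V) = B (w : V) (w' : V) := hT w w'
    simp only [LinearMap.coprod_apply, LinearMap.comp_apply, Submodule.subtype_apply, map_add,
      LinearMap.add_apply, hortho, hortho', hSu, hTw]
  · exact fun x => by simp only [LinearMap.coprod_apply, LinearMap.prodMap_apply,
      Submodule.subtype_apply, map_add, hfU, hfW]
  · intro x
    have hSx : S (fU x.1) = hU (S x.1) := LinearMap.congr_fun hSf x.1
    have hTx : T (fW x.2) = hW (T x.2) := LinearMap.congr_fun hTf x.2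
    simp only [LinearMap.coprod_apply, LinearMap.prodMap_apply, LinearMap.comp_apply,
      Submodule.subtype_apply, map_add, hSx, hTx, hhU, hhW]

end Restriction

section Unipotent

section Stable

variable {F V : Type*} [Field F] [AddCommGroup V] [Module F V]
  {U : Submodule F V} {B : LinearMap.BilinForm F V}

theorem isOrthogonal_restrict {f : Module.End F V} (hf : B.IsOrthogonal f) {f' : Module.End F U}
    (hU : ∀ x, (f' x : V) = f x) : (B.restrict U).IsOrthogonal f' := fun x y => by
  change B (f' x : V) (f' y : V) = B (x : V) (y : V)
  rw [hU, hU, hf]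

theorem restrict_apply_add_one_pow {f : Module.End F V} {f' : Module.End F U}
    (hU : ∀ x, (f' x : V) = f x) (i : ℕ) (x y : U) :
    B.restrict U x (((f' + 1) ^ i) y) = B x (((f + 1) ^ i) y) :=
  congrArg (B x) (map_add_one_pow_of_map_apply (ι := U.subtype) hU i y)

theorem restrict_add_one_pow_eq_zero {f : Module.End F V} {f' : Module.End F U}
    (hU : ∀ x, (f' x : V) = f x) {i : ℕ} (hi : (f + 1) ^ i = 0) : (f' + 1) ^ i = 0 :=
  LinearMap.ext fun x => Subtype.ext <| (map_add_one_pow_of_map_apply (ι := U.subtype) hU i x).trans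
    (by rw [hi]; rfl)

theorem apply_mem_orthogonal {f : Module.End F V} (hf : B.IsOrthogonal f)
    {g' : (Module.End F U)ˣ} (hU : ∀ x, (g'.val x : V) = f x) {y : V} (hy : y ∈ B.orthogonal U) :
    f y ∈ B.orthogonal U := fun x hx => by
  have hxy : f ((g'⁻¹).val ⟨x, hx⟩ : U) = x := by
    rw [← hU, ← Module.End.mul_apply, g'.mul_inv, Module.End.one_apply]
  rw [← hxy, hf]
  exact hy _ (SetLike.coe_mem _)

end Stable

variable {V : Type*} [AddCommGroup V] [Module (ZMod 2) V]
  {B : LinearMap.BilinForm (ZMod 2) V} {g : (Module.End (ZMod 2) V)ˣ} {n : ℕ}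

theorem map_pairMap_of_map_apply {U : Type*} [AddCommGroup U] [Module (ZMod 2) U]
    {ι : U →ₗ[ZMod 2] V} {g' : (Module.End (ZMod 2) U)ˣ} (h : ∀ x, ι (g'.val x) = g.val (ι x))
    (u : U) (x : (ZMod 2)[X] × (ZMod 2)[X]) : ι (pairMap g' u x) = pairMap g (ι u) x := by
  have haddInv := map_aeval_of_map_apply (map_addInv_of_map_apply h)
  rw [pairMap_apply, pairMap_apply, map_add, haddInv, haddInv, h]

theorem mem_range_pairMap (g : (Module.End (ZMod 2) V)ˣ) (v : V) :
    v ∈ LinearMap.range (pairMap g v) :=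
  ⟨(1, 0), by rw [pairMap_apply, map_one, map_zero, LinearMap.zero_apply, add_zero,
    Module.End.one_apply]⟩

/-- A nondegenerate `g`-stable subspace on which `g` is isometrically conjugate to its
`2 j + 1`-st power; the unipotent case is an orthogonal sum of such blocks. -/
structure IsConjBlock (B : LinearMap.BilinForm (ZMod 2) V) (g : (Module.End (ZMod 2) V)ˣ) (j : ℕ)
    (U : Submodule (ZMod 2) V) (g' : (Module.End (ZMod 2) U)ˣ) : Prop where
  coe_apply : ∀ x, (g'.val x : V) = g.val x
  nondegenerate : (B.restrict U).Nondegenerate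
  isometricConj : IsometricConj (B.restrict U) g' ↑(g' ^ (2 * j + 1))

theorem exists_isConjBlock_range_pairMap [FiniteDimensional (ZMod 2) V] (halt : B.IsAlt)
    (hg : B.IsOrthogonal g) (j : ℕ) (hn : (g.val + 1) ^ (n + 1) = 0) {v : V}
    (hv : B v (((g.val + 1) ^ n) v) ≠ 0) :
    ∃ g', IsConjBlock B g j (LinearMap.range (pairMap g v)) g' := by
  obtain ⟨g', hU⟩ := exists_units_restrict (g := g) (U := LinearMap.range (pairMap g v)) (by
    rintro _ ⟨x, rfl⟩
    exact ⟨_, pairMap_pairShift g v x⟩)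
  have halt' : (B.restrict (LinearMap.range (pairMap g v))).IsAlt := fun x => halt x
  have hg' := isOrthogonal_restrict hg hU
  have hn' := restrict_add_one_pow_eq_zero hU hn
  set v' : LinearMap.range (pairMap g v) := ⟨v, mem_range_pairMap g v⟩
  have hv' : B.restrict _ v' (((g'.val + 1) ^ n) v') ≠ 0 := by
    rwa [restrict_apply_add_one_pow hU]
  have hsurj : Function.Surjective (pairMap g' v') := by
    rintro ⟨_, x, rfl⟩
    exact ⟨x, Subtype.ext (map_pairMap_of_map_apply (ι := Submodule.subtype _) hU v' x)⟩
  exact ⟨g', hU, nondegenerate_of_cyclic (isSymm_of_isAlt halt') hg' hn' hv' hsurj,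
    isometricConj_pow_odd_of_cyclic_top halt' hg' j hn' hv' hsurj⟩

theorem exists_isConjBlock_range_coprod_pairMap [Finite V] (halt : B.IsAlt)
    (hg : B.IsOrthogonal g) (j : ℕ) (htop : ∀ x, B x (((g.val + 1) ^ n) x) = 0)
    (hn : (g.val + 1) ^ (n + 1) = 0) {v w : V} (hvw : B v (((g.val + 1) ^ n) w) ≠ 0) :
    ∃ g', IsConjBlock B g j (LinearMap.range ((pairMap g v).coprod (pairMap g w))) g' := by
  set U := LinearMap.range ((pairMap g v).coprod (pairMap g w))
  obtain ⟨g', hU⟩ := exists_units_restrict (g := g) (U := U) (by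
    rintro _ ⟨x, rfl⟩
    exact ⟨_, coprod_pairMap_pairShift g v w x⟩)
  have halt' : (B.restrict U).IsAlt := fun x => halt x
  have hg' := isOrthogonal_restrict hg hU
  have hn' := restrict_add_one_pow_eq_zero hU hn
  have hrange : U = LinearMap.range (pairMap g v) ⊔ LinearMap.range (pairMap g w) :=
    LinearMap.range_coprod _ _
  set v' : U := ⟨v, hrange ▸ Submodule.mem_sup_left (mem_range_pairMap g v)⟩
  set w' : U := ⟨w, hrange ▸ Submodule.mem_sup_right (mem_range_pairMap g w)⟩
  have htop' : ∀ x, B.restrict U x (((g'.val + 1) ^ n) x) = 0 := fun x => by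
    rw [restrict_apply_add_one_pow hU, htop]
  have hvw' : B.restrict U v' (((g'.val + 1) ^ n) w') ≠ 0 := by
    rwa [restrict_apply_add_one_pow hU]
  have hsurj : Function.Surjective ((pairMap g' v').coprod (pairMap g' w')) := by
    rintro ⟨_, x, rfl⟩
    exact ⟨x, Subtype.ext (congrArg₂ (· + ·)
      (map_pairMap_of_map_apply (ι := U.subtype) hU v' x.1)
      (map_pairMap_of_map_apply (ι := U.subtype) hU w' x.2))⟩
  exact ⟨g', hU, nondegenerate_of_pair (isSymm_of_isAlt halt') hg' htop' hn' hvw' hsurj,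
    isometricConj_pow_odd_of_pair_top halt' hg' j htop' hn' hvw' hsurj⟩

theorem exists_isConjBlock_ne_bot [Finite V] [Nontrivial V] (hB : B.Nondegenerate) (halt : B.IsAlt)
    (hg : B.IsOrthogonal g) (j : ℕ) (hnil : IsNilpotent (g.val + 1)) :
    ∃ U ≠ ⊥, ∃ g', IsConjBlock B g j U g' := by
  obtain ⟨n, hn, hne⟩ : ∃ n, (g.val + 1) ^ (n + 1) = 0 ∧ (g.val + 1) ^ n ≠ 0 :=
    ⟨nilpotencyClass (g.val + 1) - 1,
      by rw [Nat.sub_add_cancel (pos_nilpotencyClass_iff.2 hnil), pow_nilpotencyClass hnil],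
      pow_pred_nilpotencyClass hnil⟩
  by_cases htop : ∀ x, B x (((g.val + 1) ^ n) x) = 0
  · obtain ⟨w, hw⟩ : ∃ w, ((g.val + 1) ^ n) w ≠ 0 := by
      by_contra! hzero
      exact hne (LinearMap.ext hzero)
    obtain ⟨v, hvw⟩ : ∃ v, B v (((g.val + 1) ^ n) w) ≠ 0 := by
      by_contra! hzero
      exact hw (hB.2 _ hzero)
    refine ⟨_, fun hbot => hvw ?_, exists_isConjBlock_range_coprod_pairMap halt hg j htop hn hvw⟩
    have hv : v ∈ LinearMap.range ((pairMap g v).coprod (pairMap g w)) := by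
      rw [LinearMap.range_coprod]
      exact Submodule.mem_sup_left (mem_range_pairMap g v)
    rw [hbot, Submodule.mem_bot] at hv
    rw [hv, map_zero, LinearMap.zero_apply]
  · push Not at htop
    obtain ⟨v, hv⟩ := htop
    refine ⟨_, fun hbot => hv ?_, exists_isConjBlock_range_pairMap halt hg j hn hv⟩
    have hmem := mem_range_pairMap g v
    rw [hbot, Submodule.mem_bot] at hmem
    rw [hmem, map_zero, LinearMap.zero_apply]

theorem isometricConj_pow_odd_of_isNilpotent [Finite V] (hB : B.Nondegenerate) (halt : B.IsAlt)
    (hg : B.IsOrthogonal g) (j : ℕ) (hnil : IsNilpotent (g.val + 1)) :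
    IsometricConj B g ↑(g ^ (2 * j + 1)) := by
  induction hd : Module.finrank (ZMod 2) V using Nat.strong_induction_on generalizing V with
  | _ d ih =>
    have hsymm := isSymm_of_isAlt halt
    rcases subsingleton_or_nontrivial V with _ | _
    · exact ⟨1, Subsingleton.elim _ _, fun _ _ => rfl⟩
    obtain ⟨U, hU, gU, hblock⟩ := exists_isConjBlock_ne_bot hB halt hg j hnil
    have hUW := LinearMap.BilinForm.isCompl_orthogonal_of_restrict_nondegenerate hsymm.isRefl
      hblock.nondegenerate
    have horth : ∀ x ∈ U, ∀ y ∈ B.orthogonal U, B x y = 0 := fun x hx y hy => hy x hx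
    obtain ⟨gW, hgW⟩ := exists_units_restrict (g := g) (U := B.orthogonal U) fun _ =>
      apply_mem_orthogonal hg hblock.coe_apply
    have hlt : Module.finrank (ZMod 2) (B.orthogonal U) < d := hd ▸ Submodule.finrank_lt fun htop =>
      hU (eq_bot_of_isCompl_top (htop ▸ hUW))
    have hW : IsometricConj (B.restrict (B.orthogonal U)) gW ↑(gW ^ (2 * j + 1)) :=
      ih _ hlt (nondegenerate_restrict_of_isCompl hB hsymm hUW.symm fun x hx y hy => by
        rw [hsymm.eq, horth y hy x hx]) (fun x => halt x) (isOrthogonal_restrict hg hgW)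
        (hnil.imp fun _ => restrict_add_one_pow_eq_zero hgW) rfl
    exact isometricConj_of_isCompl hB hsymm hUW horth hblock.coe_apply
      (map_pow_of_map_apply (ι := U.subtype) hblock.coe_apply _) hgW
      (map_pow_of_map_apply (ι := (B.orthogonal U).subtype) hgW _) hblock.isometricConj hW

end Unipotent

section Main

variable {V : Type*} [AddCommGroup V] [Module (ZMod 2) V]
  {B : LinearMap.BilinForm (ZMod 2) V} {g : (Module.End (ZMod 2) V)ˣ} {a e m k : ℕ}

theorem isometricConj_pow_of_isUnit_addInv [FiniteDimensional (ZMod 2) V] (hB : B.Nondegenerate)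
    (hsymm : B.IsSymm) (hg : B.IsOrthogonal g) (ht : IsUnit (addInv g)) (he : e ≠ 0)
    (hord : g ^ (2 ^ a * e) = 1) (hm : Odd m) (hmod : m ≡ 2 ^ k [MOD e]) :
    IsometricConj B g ↑(g ^ m) := by
  obtain ⟨T, hT, hTg⟩ := exists_linearConj_pow he (congrArg Units.val hord) hm.not_two_dvd_nat hmod
  exact isometricConj_of_isUnit_addInv hB hsymm hg ht (isOrthogonal_pow hg m) hT hTg

theorem isNilpotent_add_one_of_ker_addInv_pow {n : ℕ}
    {g' : (Module.End (ZMod 2) (LinearMap.ker (addInv g ^ n)))ˣ}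
    (hg' : ∀ x, (g'.val x : V) = g.val x) : IsNilpotent (g'.val + 1) := by
  have hker : addInv g' ^ n = 0 := LinearMap.ext fun x => Subtype.ext <|
    (map_pow_of_map_apply (map_addInv_of_map_apply (ι := Submodule.subtype _) hg') n x).trans x.2
  exact ⟨2 * n, by rw [add_one_pow_two_mul, hker, mul_zero]⟩

theorem isUnit_addInv_of_range_addInv_pow [FiniteDimensional (ZMod 2) V] {n : ℕ} (hn : 1 ≤ n)
    (hdisj : Disjoint (LinearMap.ker (addInv g ^ n)) (LinearMap.range (addInv g ^ n)))
    {g' : (Module.End (ZMod 2) (LinearMap.range (addInv g ^ n)))ˣ}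
    (hg' : ∀ x, (g'.val x : V) = g.val x) : IsUnit (addInv g') := by
  refine isUnit_of_injective ((injective_iff_map_eq_zero _).2 fun x hx => Subtype.ext ?_)
  have hgx : addInv g (x : V) = 0 := by
    rw [← Submodule.subtype_apply, ← map_addInv_of_map_apply (ι := Submodule.subtype _) hg', hx,
      map_zero]
  have hpow : ∀ y, addInv g y = 0 → (addInv g ^ n) y = 0 := fun y hy => by
    rw [← Nat.sub_add_cancel hn, pow_succ, Module.End.mul_apply, hy, map_zero]
  exact Submodule.disjoint_def.1 hdisj x (LinearMap.mem_ker.2 (hpow _ hgx)) x.2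

theorem isometricConj_pow [Finite V] (hB : B.Nondegenerate) (halt : B.IsAlt)
    (hg : B.IsOrthogonal g) (he : e ≠ 0) (hord : g ^ (2 ^ a * e) = 1) (hm : Odd m)
    (hmod : m ≡ 2 ^ k [MOD e]) : IsometricConj B g ↑(g ^ m) := by
  have hsymm := isSymm_of_isAlt halt
  obtain ⟨n, hn, hUW⟩ := ((Filter.eventually_ge_atTop 1).and
    (LinearMap.eventually_isCompl_ker_pow_range_pow (addInv g))).exists
  set U := LinearMap.ker (addInv g ^ n)
  set W := LinearMap.range (addInv g ^ n)
  have hcomm : ∀ x, g.val ((addInv g ^ n) x) = (addInv g ^ n) (g.val x) :=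
    LinearMap.congr_fun ((commute_val_addInv g).pow_right n).eq
  have horth : ∀ x ∈ U, ∀ y ∈ W, B x y = 0 := by
    rintro x hx _ ⟨y, rfl⟩
    have hadj := isAdjointPair_aeval (isSelfAdjoint_addInv hg) (X ^ n) x y
    rw [map_pow, aeval_X] at hadj
    rw [← hadj, LinearMap.mem_ker.1 hx, map_zero, LinearMap.zero_apply]
  obtain ⟨gU, hgU⟩ := exists_units_restrict (g := g) (U := U) fun x hx => by
    rw [LinearMap.mem_ker, ← hcomm, LinearMap.mem_ker.1 hx, map_zero]
  obtain ⟨gW, hgW⟩ := exists_units_restrict (g := g) (U := W) (by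
    rintro _ ⟨x, rfl⟩
    exact ⟨_, (hcomm x).symm⟩)
  have hU : IsometricConj (B.restrict U) gU ↑(gU ^ m) := by
    obtain ⟨j, rfl⟩ := hm
    exact isometricConj_pow_odd_of_isNilpotent
      (nondegenerate_restrict_of_isCompl hB hsymm hUW horth) (fun x => halt x)
      (isOrthogonal_restrict hg hgU) j (isNilpotent_add_one_of_ker_addInv_pow hgU)
  have hW : IsometricConj (B.restrict W) gW ↑(gW ^ m) := by
    have hordW : gW ^ (2 ^ a * e) = 1 := Units.ext <| LinearMap.ext fun x => Subtype.ext <|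
      (map_pow_of_map_apply (ι := W.subtype) hgW _ x).trans
        (LinearMap.congr_fun (congrArg Units.val hord) x.1)
    exact isometricConj_pow_of_isUnit_addInv
      (nondegenerate_restrict_of_isCompl hB hsymm hUW.symm fun x hx y hy => by
        rw [hsymm.eq, horth y hy x hx]) (hsymm.restrict W) (isOrthogonal_restrict hg hgW)
      (isUnit_addInv_of_range_addInv_pow hn hUW.disjoint hgW) he hordW hm hmod
  exact isometricConj_of_isCompl hB hsymm hUW horth hgU
    (map_pow_of_map_apply (ι := U.subtype) hgU _) hgW
    (map_pow_of_map_apply (ι := W.subtype) hgW _) hU hW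

end Main

section SymplecticGroup

open Matrix

variable {l : Type*} [Fintype l] [DecidableEq l] {R : Type*} [CommRing R]

theorem isAlt_toBilin'_J : (toBilin' (J l R)).IsAlt := fun x => by
  simp only [toBilin'_apply', J, fromBlocks_mulVec, zero_mulVec, one_mulVec, neg_mulVec, zero_add,
    add_zero, dotProduct, Fintype.sum_sum_type, Sum.elim_inl, Sum.elim_inr, Function.comp_apply,
    Pi.neg_apply, mul_comm (x (Sum.inl _)), neg_mul, Finset.sum_neg_distrib, neg_add_cancel]

theorem nondegenerate_toBilin'_J [IsDomain R] : (toBilin' (J l R)).Nondegenerate :=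
  LinearMap.BilinForm.nondegenerate_toBilin'_of_det_ne_zero' _ (isUnit_det_J l R).ne_zero

theorem mem_symplecticGroup_iff_isOrthogonal {A : Matrix (l ⊕ l) (l ⊕ l) R} :
    A ∈ symplecticGroup l R ↔ (toBilin' (J l R)).IsOrthogonal (toLin' A) := by
  rw [SymplecticGroup.mem_iff', ← (toBilin' (R₁ := R)).injective.eq_iff, ← toBilin'_comp,
    LinearMap.BilinForm.ext_iff]
  rfl

/-- The action of the symplectic group on column vectors, as units of the endomorphism ring. -/
noncomputable def symplecticAction : symplecticGroup l R →* (Module.End R (l ⊕ l → R))ˣ :=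
  (toLinAlgEquiv'.toMonoidHom.comp (symplecticGroup l R).subtype).toHomUnits

theorem val_symplecticAction (g : symplecticGroup l R) :
    (symplecticAction g).val = toLin' g.val := rfl

theorem isConj_of_isometricConj {F : Type*} [Field F] {g h : symplecticGroup l F}
    (hgh : IsometricConj (toBilin' (J l F)) (symplecticAction g).val (symplecticAction h).val) :
    IsConj g h := by
  obtain ⟨T, hTg, hT⟩ := hgh
  obtain ⟨A, rfl⟩ := (toLin' (R := F)).surjective T
  refine isConj_iff.2 ⟨⟨A, mem_symplecticGroup_iff_isOrthogonal.2 hT⟩, ?_⟩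
  rw [mul_inv_eq_iff_eq_mul]
  rw [val_symplecticAction, val_symplecticAction, Module.End.mul_eq_comp, Module.End.mul_eq_comp,
    ← toLin'_mul, ← toLin'_mul] at hTg
  exact Subtype.ext (toLin'.injective hTg)

theorem isConj_pow_symplecticGroup {a e m k : ℕ} (g : symplecticGroup l (ZMod 2)) (he : e ≠ 0)
    (hord : g ^ (2 ^ a * e) = 1) (hm : Odd m) (hmod : m ≡ 2 ^ k [MOD e]) : IsConj g (g ^ m) := by
  refine isConj_of_isometricConj ?_
  rw [map_pow]
  exact isometricConj_pow nondegenerate_toBilin'_J isAlt_toBilin'_J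
    (mem_symplecticGroup_iff_isOrthogonal.1 g.2) he (by rw [← map_pow, hord, map_one]) hm hmod

theorem two_dvd_exponent_symplecticGroup [Nonempty l] [Nontrivial R] [CharP R 2] :
    2 ∣ Monoid.exponent (symplecticGroup l R) := by
  have hJ : orderOf (SymplecticGroup.symJ l R) = 2 := by
    refine orderOf_eq_prime (Subtype.ext ?_) fun hone => ?_
    · rw [sq, Submonoid.coe_mul, SymplecticGroup.coe_J, J_squared, Submonoid.coe_one]
      ext i j
      rw [Matrix.neg_apply, CharTwo.neg_eq]
    · have hentry := congrFun₂ (congrArg Subtype.val hone) (.inl (Classical.arbitrary l))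
        (.inl (Classical.arbitrary l))
      rw [SymplecticGroup.coe_J, Submonoid.coe_one, J, fromBlocks_apply₁₁, Matrix.zero_apply,
        one_apply_eq] at hentry
      exact zero_ne_one hentry
  exact hJ ▸ Monoid.order_dvd_exponent _

end SymplecticGroup

end SymplecticTwo

open SymplecticTwo in
theorem galois_action_trivial_on_odd_characters_general {l : Type*} [Fintype l] [DecidableEq l]
    {K : Type*} [Field K] (V : FDRep K (Matrix.symplecticGroup l (ZMod 2))) {m k : ℕ} (hm : Odd m)
    (hmod : m ≡ 2 ^ k
      [MOD ordCompl[2] (Monoid.exponent (Matrix.symplecticGroup l (ZMod 2)))])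
    (g : Matrix.symplecticGroup l (ZMod 2)) : V.character (g ^ m) = V.character g := by
  have : Finite (Matrix.symplecticGroup l (ZMod 2)) := Subtype.finite
  have hexp : Monoid.exponent (Matrix.symplecticGroup l (ZMod 2)) ≠ 0 :=
    Monoid.exponent_ne_zero_of_finite
  have hord : g ^ (ordProj[2] (Monoid.exponent (Matrix.symplecticGroup l (ZMod 2))) *
      ordCompl[2] (Monoid.exponent (Matrix.symplecticGroup l (ZMod 2)))) = 1 := by
    rw [Nat.ordProj_mul_ordCompl_eq_self, Monoid.pow_exponent_eq_one]
  obtain ⟨S, hS⟩ := isConj_iff.1 <|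
    isConj_pow_symplecticGroup g (Nat.ordCompl_pos 2 hexp).ne' hord hm hmod
  rw [← hS, FDRep.char_conj]

/-- Let `n ≥ 1`, `G = Sp_{2n}(𝔽₂)`, and `χ` the character of a finite-dimensional
irreducible complex representation of `G` of odd degree. Let `e` be the exponent of `G`
and `e'` its odd part. Then for every `m` coprime to `e` with `m ≡ 2 ^ k (mod e')` for
some `k`, one has `χ (g ^ m) = χ g` for all `g ∈ G`. -/
theorem galois_action_trivial_on_odd_characters (n : ℕ) (hn : 1 ≤ n)
    (V : FDRep ℂ (Matrix.symplecticGroup (Fin n) (ZMod 2)))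
    (hV : CategoryTheory.Simple V)
    (hodd : Odd (Module.finrank ℂ V))
    (m k : ℕ)
    (hm : Nat.Coprime m (Monoid.exponent (Matrix.symplecticGroup (Fin n) (ZMod 2))))
    (hmod : m ≡ 2 ^ k
      [MOD ordCompl[2] (Monoid.exponent (Matrix.symplecticGroup (Fin n) (ZMod 2)))]) :
    ∀ g : Matrix.symplecticGroup (Fin n) (ZMod 2),
      V.character (g ^ m) = V.character g := by
  have : NeZero n := ⟨Nat.one_le_iff_ne_zero.1 hn⟩
  have hoddm : Odd m := Nat.coprime_two_right.1
    (hm.coprime_dvd_right SymplecticTwo.two_dvd_exponent_symplecticGroup)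
  exact galois_action_trivial_on_odd_characters_general V hoddm hmod
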